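/- arXiv:1903.02385 — 3 statements merged into one kernel-verified Lean document; each statement's English description precedes it below -/
import Mathlib

section
/- Let v, w : ℝ → ℝ be C⁴ positive solutions of the ODE v''''(t) − A·v''(t) + B·v(t) = g(v(t)) with inf_{t ∈ ℝ} v(t) = 0 and inf_{t ∈ ℝ} w(t) = 0. Then there exists τ ∈ ℝ such that w(t) = v(t + τ) for all t ∈ ℝ. In particular, the positive solution with infimum 0 is unique up to translations. -/
open Real Filter Set

noncomputable section

/-- Conditions (G) on the nonlinearity `g`, extended to `[0,∞)` by `g 0 = 0`. -/
def CondG (n : ℕ) (g : ℝ → ℝ) : Prop :=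
  ContDiffOn ℝ 1 g (Set.Ioi 0) ∧
  (∀ t > 0, 0 < g t) ∧
  Filter.Tendsto g (nhdsWithin 0 (Set.Ioi 0)) (nhds 0) ∧
  (∀ t > 0, g t / t < deriv g t ∧ deriv g t ≤ (((n : ℝ) + 4) / ((n : ℝ) - 4)) * (g t / t)) ∧
  (∃ β : ℝ, 0 ≤ β ∧ β < (n : ℝ) ^ 2 * ((n : ℝ) - 4) ^ 2 / 16 ∧
    Filter.Tendsto (deriv g) (nhdsWithin 0 (Set.Ioi 0)) (nhds β)) ∧
  (∃ q c : ℝ, 1 < q ∧ 0 < c ∧ ∀ t ≥ 1, c * t ^ q ≤ g t) ∧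
  g 0 = 0

/-- `v` solves the ODE `v'''' - A v'' + B v = g(v)` on all of `ℝ`. -/
def IsSol (A B : ℝ) (g v : ℝ → ℝ) : Prop :=
  ∀ t : ℝ, iteratedDeriv 4 v t - A * iteratedDeriv 2 v t + B * v t = g (v t)

/-!
With `A = l² + m²` and `B = l² m²` the operator factors as `(D² - l²)(D² - m²)`. Finite-time blow-up
of superlinear growth forces `y = m² v - v'' ≥ 0`, and Harnack inequalities for `v` and `y` then
bound `v` and dominate its first three derivatives by `v`. Hence the conserved energy is `O(v²)`,
so it vanishes when `inf v = 0`. Zero energy rules out a monotone solution; hence `v` has a critical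
point, where it is symmetric, and therefore a local maximum.

If `v = k w` and `v' = k w'` at a point, with `k ≥ 1`, then `v'' ≤ k w''` there: otherwise the
difference `v - k w` would be unbounded. At two local maxima translated to the same point, zero
energy turns `v > w` into the reverse strict inequality with `k = v / w`, so the values agree, then
all derivatives up to order three, and finally the solutions.
-/

namespace FourthOrderODE

/-! ### First-order differential inequalities -/

section FirstOrder

variable {f f' : ℝ → ℝ} {a b k c : ℝ}

lemma mul_exp_le_of_mul_le_deriv (hf : ∀ t, HasDerivAt f (f' t) t) (hab : a ≤ b)
    (h : ∀ t ∈ Ioo a b, k * f t ≤ f' t) : f a * exp (k * (b - a)) ≤ f b := by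
  have hasDeriv (t : ℝ) : HasDerivAt (fun s ↦ f s * exp (k * (b - s)))
      (f' t * exp (k * (b - t)) + f t * (exp (k * (b - t)) * (k * -1))) t :=
    (hf t).mul (((hasDerivAt_id t).const_sub b).const_mul k).exp
  have mono : MonotoneOn (fun s ↦ f s * exp (k * (b - s))) (Icc a b) := by
    refine monotoneOn_of_hasDerivWithinAt_nonneg (convex_Icc a b)
      (HasDerivAt.continuousOn fun t _ ↦ hasDeriv t) (fun t _ ↦ (hasDeriv t).hasDerivWithinAt) ?_
    intro t ht
    rw [interior_Icc] at ht
    linarith [mul_nonneg (sub_nonneg.2 (h t ht)) (exp_pos (k * (b - t))).le]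
  simpa using mono (left_mem_Icc.2 hab) (right_mem_Icc.2 hab) hab

lemma le_of_deriv_nonneg (hf : ∀ t, HasDerivAt f (f' t) t) (hab : a ≤ b)
    (h : ∀ t ∈ Ioo a b, 0 ≤ f' t) : f a ≤ f b := by
  simpa using mul_exp_le_of_mul_le_deriv (k := 0) hf hab (by simpa using h)

lemma add_mul_le_of_le_deriv (hf : ∀ t, HasDerivAt f (f' t) t) (hab : a ≤ b)
    (h : ∀ t ∈ Ioo a b, c ≤ f' t) : f a + c * (b - a) ≤ f b := by
  have := le_of_deriv_nonneg (fun t ↦ (hf t).sub ((hasDerivAt_id t).const_mul c)) hab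
    (fun t ht ↦ by linarith [h t ht])
  simp only [Pi.sub_apply, id_eq] at this
  linarith

lemma nonneg_of_mul_le_deriv (hf : ∀ t, HasDerivAt f (f' t) t) (hab : a ≤ b) (ha : 0 ≤ f a)
    (h : ∀ t ∈ Ioo a b, k * f t ≤ f' t) : 0 ≤ f b :=
  (mul_nonneg ha (exp_pos _).le).trans (mul_exp_le_of_mul_le_deriv hf hab h)

lemma tendsto_atTop_of_le_deriv (hf : ∀ t, HasDerivAt f (f' t) t) (hc : 0 < c)
    (h : ∀ᶠ t in atTop, c ≤ f' t) : Tendsto f atTop atTop := by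
  obtain ⟨T, hT⟩ := eventually_atTop.1 h
  have line : Tendsto (fun t ↦ f T + c * (t - T)) atTop atTop :=
    tendsto_atTop_add_const_left _ _
      ((tendsto_atTop_add_const_right _ (-T) tendsto_id).const_mul_atTop hc)
  refine tendsto_atTop_mono' _ ?_ line
  filter_upwards [eventually_ge_atTop T] with t ht
  exact add_mul_le_of_le_deriv hf ht fun s hs ↦ hT s hs.1.le

lemma tendsto_atTop_of_deriv_add_mul (hf : ∀ t, HasDerivAt f (f' t) t) (hk : 0 < k)
    (h : Tendsto (fun t ↦ f' t + k * f t) atTop atTop) : Tendsto f atTop atTop := by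
  refine tendsto_atTop.2 fun C ↦ ?_
  obtain ⟨T, hT⟩ := eventually_atTop.1 (h.eventually_ge_atTop (k * (C + 1)))
  have decay : Tendsto (fun t ↦ (f T - (C + 1)) * exp (-k * (t - T))) atTop (nhds 0) := by
    rw [← mul_zero (f T - (C + 1))]
    refine (tendsto_exp_atBot.comp ?_).const_mul _
    exact (tendsto_atTop_add_const_right _ (-T) tendsto_id).const_mul_atTop_of_neg (by linarith)
  filter_upwards [eventually_ge_atTop T, decay.eventually_const_lt (show (-1 : ℝ) < 0 by norm_num)]
    with t ht hdecay
  have := mul_exp_le_of_mul_le_deriv (k := -k) (fun s ↦ (hf s).sub_const (C + 1)) ht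
    (fun s hs ↦ by linarith [hT s hs.1.le])
  linarith

lemma eq_zero_of_tendsto_deriv_of_bounded {M L : ℝ} (hf : ∀ t, HasDerivAt f (f' t) t)
    (hM : ∀ t, |f t| ≤ M) (hL : Tendsto f' atTop (nhds L)) : L = 0 := by
  have not_pos {φ φ' : ℝ → ℝ} {ℓ : ℝ} (hφ : ∀ t, HasDerivAt φ (φ' t) t) (bound : ∀ t, φ t ≤ M)
      (lim : Tendsto φ' atTop (nhds ℓ)) : ℓ ≤ 0 := by
    by_contra! pos
    have := tendsto_atTop_of_le_deriv hφ (half_pos pos)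
      ((lim.eventually_const_lt (half_lt_self pos)).mono fun _ ↦ le_of_lt)
    obtain ⟨t, ht⟩ := (this.eventually_gt_atTop M).exists
    exact ht.not_ge (bound t)
  have upper := not_pos hf (fun t ↦ (abs_le.1 (hM t)).2) hL
  have lower := not_pos (fun t ↦ (hf t).neg) (fun t ↦ neg_le.1 (abs_le.1 (hM t)).1) hL.neg
  linarith

end FirstOrder

lemma pos_of_forall_Ico_pos {p : ℝ → ℝ} {a : ℝ} (hp : Continuous p)
    (step : ∀ b ≥ a, (∀ t ∈ Ico a b, 0 < p t) → 0 < p b) : ∀ t ≥ a, 0 < p t := by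
  by_contra! ⟨b, hab, hb⟩
  have compact : IsCompact (Icc a b ∩ {t | p t ≤ 0}) :=
    isCompact_Icc.inter_right (isClosed_le hp continuous_const)
  obtain ⟨t, ⟨ht, hpt⟩, least⟩ := compact.exists_isLeast ⟨b, ⟨hab, le_rfl⟩, hb⟩
  refine hpt.not_gt (step t ht.1 fun s hs ↦ ?_)
  by_contra! hps
  exact hs.2.not_ge (least ⟨⟨hs.1, hs.2.le.trans ht.2⟩, hps⟩)

/-! ### Second-order differential inequalities -/

section SecondOrder

variable {u u' u'' : ℝ → ℝ} {k : ℝ}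

lemma hasDerivAt_comp_neg {f f' : ℝ → ℝ} (hf : ∀ t, HasDerivAt f (f' t) t) (t : ℝ) :
    HasDerivAt (fun s ↦ f (-s)) (-f' (-t)) t := by
  simpa [Function.comp_def] using (hf (-t)).scomp t (hasDerivAt_neg t)

lemma iteratedDeriv_two_nonpos_of_isLocalMax {f : ℝ → ℝ} {a : ℝ} (hf : ContinuousAt f a)
    (h : IsLocalMax f a) : iteratedDeriv 2 f a ≤ 0 := by
  by_contra! pos
  have isLocalMin : IsLocalMin f a :=
    isLocalMin_of_deriv_deriv_pos (by simpa [iteratedDeriv_succ] using pos) h.deriv_eq_zero hf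
  have locally_const : f =ᶠ[nhds a] fun _ ↦ f a :=
    h.and isLocalMin |>.mono fun t ht ↦ le_antisymm ht.1 ht.2
  simp [locally_const.iteratedDeriv_eq, iteratedDeriv_const] at pos

lemma pos_and_deriv_nonneg_of_sq_mul_le_deriv2 (hu : ∀ t, HasDerivAt u (u' t) t)
    (hu' : ∀ t, HasDerivAt u' (u'' t) t) (h : ∀ t, k ^ 2 * u t ≤ u'' t) {a t : ℝ} (hk : 0 ≤ k)
    (ha : 0 < u a) (ha' : 0 ≤ u' a) (ht : a ≤ t) : 0 < u t ∧ 0 ≤ u' t := by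
  have sum_nonneg (s : ℝ) (hs : a ≤ s) : 0 ≤ u' s + k * u s :=
    nonneg_of_mul_le_deriv (f := fun r ↦ u' r + k * u r) (k := k)
      (fun r ↦ (hu' r).add ((hu r).const_mul k)) hs (add_nonneg ha' (mul_nonneg hk ha.le))
      fun r _ ↦ by linarith [h r]
  have u_pos (s : ℝ) (hs : a ≤ s) : 0 < u s :=
    (mul_pos ha (exp_pos _)).trans_le <| mul_exp_le_of_mul_le_deriv (k := -k) hu hs
      fun r hr ↦ by linarith [sum_nonneg r hr.1.le]
  refine ⟨u_pos t ht, ha'.trans (le_of_deriv_nonneg hu' ht fun r hr ↦ ?_)⟩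
  exact (mul_nonneg (sq_nonneg k) (u_pos r hr.1.le).le).trans (h r)

lemma deriv_le_mul_of_deriv2_le (hu : ∀ t, HasDerivAt u (u' t) t)
    (hu' : ∀ t, HasDerivAt u' (u'' t) t) (hk : 0 ≤ k) (nonneg : ∀ t, 0 ≤ u t)
    (h : ∀ t, u'' t ≤ k ^ 2 * u t) (t : ℝ) : u' t ≤ k * u t := by
  by_contra! hlt
  -- The excess `r = u' - k u` only grows backwards in time, so `u` would become negative there.
  set r : ℝ → ℝ := fun s ↦ u' s - k * u s with hr
  have r_pos : 0 < r t := sub_pos.2 hlt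
  have r_ge (s : ℝ) (hs : s ≤ t) : r t ≤ r s := by
    have growth : -r s * exp (-k * (t - s)) ≤ -r t :=
      mul_exp_le_of_mul_le_deriv (f := fun x ↦ -r x)
        (fun x ↦ ((hu' x).sub ((hu x).const_mul k)).neg) hs
        fun x _ ↦ by simp only [hr]; nlinarith [h x]
    have exp_le : exp (-k * (t - s)) ≤ 1 := exp_le_one_iff.2 (by nlinarith)
    nlinarith [exp_pos (-k * (t - s))]
  have back : t - (u t + 1) / r t ≤ t :=
    sub_le_self _ (div_nonneg (by linarith [nonneg t]) r_pos.le)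
  have drop := add_mul_le_of_le_deriv hu back fun s hs ↦
    show r t ≤ u' s from (r_ge s hs.2.le).trans (sub_le_self _ (mul_nonneg hk (nonneg s)))
  rw [sub_sub_cancel, mul_div_cancel₀ _ r_pos.ne'] at drop
  linarith [nonneg (t - (u t + 1) / r t)]

lemma abs_deriv_le_mul_of_deriv2_le (hu : ∀ t, HasDerivAt u (u' t) t)
    (hu' : ∀ t, HasDerivAt u' (u'' t) t) (hk : 0 ≤ k) (nonneg : ∀ t, 0 ≤ u t)
    (h : ∀ t, u'' t ≤ k ^ 2 * u t) (t : ℝ) : |u' t| ≤ k * u t := by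
  have reflected := deriv_le_mul_of_deriv2_le (hasDerivAt_comp_neg hu)
    (fun s ↦ (hasDerivAt_comp_neg hu' s).neg.congr_deriv (neg_neg _)) hk (fun s ↦ nonneg _)
    (fun s ↦ h _) (-t)
  rw [neg_neg] at reflected
  exact abs_le.2 ⟨by linarith, deriv_le_mul_of_deriv2_le hu hu' hk nonneg h t⟩

lemma exp_neg_mul_le_of_abs_deriv_le (hu : ∀ t, HasDerivAt u (u' t) t) (hk : 0 < k)
    (h : ∀ t, |u' t| ≤ k * u t) {t s : ℝ} (hs : s ∈ Icc t (t + 1)) : exp (-k) * u t ≤ u s := by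
  have growth := mul_exp_le_of_mul_le_deriv (k := -k) hu hs.1
    fun x _ ↦ by linarith [(abs_le.1 (h x)).1]
  have exp_le : exp (-k) ≤ exp (-k * (s - t)) := exp_le_exp.2 (by nlinarith [hs.2])
  have nonneg : 0 ≤ u t := (mul_nonneg_iff_of_pos_left hk).1 ((abs_nonneg _).trans (h t))
  nlinarith

lemma mul_le_of_forall_Icc_le_source {f : ℝ → ℝ} {a t : ℝ} (hu : ∀ t, HasDerivAt u (u' t) t)
    (hu' : ∀ t, HasDerivAt u' (k ^ 2 * u t - f t) t) (hk : 0 < k) (nonneg : ∀ t, 0 ≤ u t)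
    (source_nonneg : ∀ t, 0 ≤ f t) (ha : ∀ s ∈ Icc t (t + 1), a ≤ f s) :
    (1 - exp (-k)) * a ≤ 2 * k ^ 2 * u t := by
  have harnack (s : ℝ) : |u' s| ≤ k * u s := abs_deriv_le_mul_of_deriv2_le hu hu' hk.le nonneg
    (fun s ↦ sub_le_self _ (source_nonneg s)) s
  -- `w = u' + k u` is nonnegative, at most `2 k u`, and solves `w' = k w - f`.
  have growth := mul_exp_le_of_mul_le_deriv (f := fun s ↦ a - k * (u' s + k * u s)) (k := k)
    (fun s ↦ (((hu' s).add ((hu s).const_mul k)).const_mul k).const_sub a) (le_add_of_nonneg_right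
      zero_le_one) fun s hs ↦ by
        linarith [mul_le_mul_of_nonneg_left (ha s (Ioo_subset_Icc_self hs)) hk.le]
  have end_le : a - k * (u' (t + 1) + k * u (t + 1)) ≤ a :=
    sub_le_self _ (mul_nonneg hk.le (by linarith [(abs_le.1 (harnack (t + 1))).1]))
  have start_le : a - k * (u' t + k * u t) ≤ a * exp (-k) := by
    rw [exp_neg, ← div_eq_mul_inv, le_div_iff₀ (exp_pos k)]
    simpa using growth.trans end_le
  nlinarith [(abs_le.1 (harnack t)).2]

end SecondOrder

/-! ### A comparison cone for fourth-order operators -/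

-- The chain factors a fourth-order equation as `(D - l)(D - m)(D + m)(D + l) z = h`; all four
-- quantities stay nonnegative because each one drives the previous one upwards.
lemma tendsto_atTop_of_factored {z b c p h : ℝ → ℝ} {l m a : ℝ}
    (hz : ∀ t, HasDerivAt z (b t - l * z t) t) (hb : ∀ t, HasDerivAt b (c t - m * b t) t)
    (hc : ∀ t, HasDerivAt c (p t + m * c t) t) (hp : ∀ t, HasDerivAt p (h t + l * p t) t)
    (hh : ∀ t, 0 ≤ z t → 0 ≤ h t) (hl : 0 < l) (hm : 0 < m)
    (hza : 0 ≤ z a) (hba : 0 ≤ b a) (hca : 0 ≤ c a) (hpa : 0 < p a) :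
    Tendsto z atTop atTop := by
  have nonneg {t : ℝ} (ht : a ≤ t) (pos : ∀ s ∈ Ico a t, 0 < p s) : 0 ≤ c t ∧ 0 ≤ z t := by
    have c_nonneg (s : ℝ) (hs : s ∈ Icc a t) : 0 ≤ c s :=
      nonneg_of_mul_le_deriv (k := m) hc hs.1 hca
        fun r hr ↦ by linarith [pos r ⟨hr.1.le, hr.2.trans_le hs.2⟩]
    have b_nonneg (s : ℝ) (hs : s ∈ Icc a t) : 0 ≤ b s :=
      nonneg_of_mul_le_deriv (k := -m) hb hs.1 hba
        fun r hr ↦ by linarith [c_nonneg r ⟨hr.1.le, hr.2.le.trans hs.2⟩]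
    exact ⟨c_nonneg t (right_mem_Icc.2 ht), nonneg_of_mul_le_deriv (k := -l) hz ht hza
      fun s hs ↦ by linarith [b_nonneg s (Ioo_subset_Icc_self hs)]⟩
  have p_growth {t : ℝ} (ht : a ≤ t) (pos : ∀ s ∈ Ico a t, 0 < p s) :
      p a * exp (l * (t - a)) ≤ p t :=
    mul_exp_le_of_mul_le_deriv hp ht fun s hs ↦ le_add_of_nonneg_left <|
      hh s (nonneg hs.1.le fun r hr ↦ pos r ⟨hr.1, hr.2.trans hs.2⟩).2
  have p_pos : ∀ t ≥ a, 0 < p t :=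
    pos_of_forall_Ico_pos (continuous_iff_continuousAt.2 fun t ↦ (hp t).continuousAt) fun t ht pos ↦
      (mul_pos hpa (exp_pos _)).trans_le (p_growth ht pos)
  have p_ge (t : ℝ) (ht : a ≤ t) : p a ≤ p t :=
    (le_mul_of_one_le_right hpa.le
      (one_le_exp (mul_nonneg hl.le (sub_nonneg.2 ht)))).trans (p_growth ht fun s hs ↦ p_pos s hs.1)
  have c_lim : Tendsto c atTop atTop := by
    refine tendsto_atTop_of_le_deriv hc hpa ((eventually_ge_atTop a).mono fun t ht ↦ ?_)
    exact (p_ge t ht).trans (le_add_of_nonneg_right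
      (mul_nonneg hm.le (nonneg ht fun s hs ↦ p_pos s hs.1).1))
  have b_lim : Tendsto b atTop atTop :=
    tendsto_atTop_of_deriv_add_mul hb hm (by simpa using c_lim)
  exact tendsto_atTop_of_deriv_add_mul hz hl (by simpa using b_lim)

lemma tendsto_atTop_of_deriv4_eq {z z₁ z₂ z₃ h : ℝ → ℝ} {l m a : ℝ}
    (hz : ∀ t, HasDerivAt z (z₁ t) t) (hz₁ : ∀ t, HasDerivAt z₁ (z₂ t) t)
    (hz₂ : ∀ t, HasDerivAt z₂ (z₃ t) t)
    (hz₃ : ∀ t, HasDerivAt z₃ ((l ^ 2 + m ^ 2) * z₂ t - l ^ 2 * m ^ 2 * z t + h t) t)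
    (hh : ∀ t, 0 ≤ z t → 0 ≤ h t) (hl : 0 < l) (hm : 0 < m) (hza : z a = 0) (hz₁a : z₁ a = 0)
    (hz₂a : 0 ≤ z₂ a) (hz₃a : 0 ≤ z₃ a) (hne : 0 < z₂ a ∨ 0 < z₃ a) :
    Tendsto z atTop atTop := by
  refine tendsto_atTop_of_factored (b := fun t ↦ z₁ t + l * z t)
    (c := fun t ↦ z₂ t + (l + m) * z₁ t + l * m * z t)
    (p := fun t ↦ z₃ t + l * z₂ t - m ^ 2 * z₁ t - l * m ^ 2 * z t) (a := a)
    (fun t ↦ (hz t).congr_deriv (by ring))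
    (fun t ↦ ((hz₁ t).add ((hz t).const_mul l)).congr_deriv (by ring))
    (fun t ↦ (((hz₂ t).add ((hz₁ t).const_mul (l + m))).add ((hz t).const_mul (l * m))).congr_deriv
      (by ring))
    (fun t ↦ ((((hz₃ t).add ((hz₂ t).const_mul l)).sub ((hz₁ t).const_mul (m ^ 2))).sub
      ((hz t).const_mul (l * m ^ 2))).congr_deriv (by ring)) hh hl hm hza.ge ?_ ?_ ?_
  · simp only [hza, hz₁a, mul_zero, add_zero, le_refl]
  · simpa only [hza, hz₁a, mul_zero, add_zero] using hz₂a
  · simp only [hza, hz₁a, mul_zero, sub_zero]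
    rcases hne with pos | pos <;> positivity

/-! ### Superlinear nonlinearities -/

/-- The class of nonlinearities for which uniqueness is proved: positive, with `g t / t` strictly
increasing, locally Lipschitz, and growing at least like a power `t ^ q` with `q > 1`. Only the
values on `(0, ∞)` matter. -/
structure IsSuperlinear (g : ℝ → ℝ) : Prop where
  pos : ∀ t > 0, 0 < g t
  strictMonoOn_div : StrictMonoOn (fun t ↦ g t / t) (Ioi 0)
  locallyLipschitzOn : LocallyLipschitzOn (Ioi 0) g
  exists_mul_rpow_le : ∃ q c : ℝ, 1 < q ∧ 0 < c ∧ ∀ t ≥ 1, c * t ^ q ≤ g t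

lemma isSuperlinear_of_condG {n : ℕ} {g : ℝ → ℝ} (hg : CondG n g) : IsSuperlinear g := by
  obtain ⟨contDiffOn, pos, -, deriv_bounds, -, growth, -⟩ := hg
  have hasDerivAt {t : ℝ} (ht : 0 < t) : HasDerivAt g (deriv g t) t :=
    ((contDiffOn.differentiableOn one_ne_zero).differentiableAt (Ioi_mem_nhds ht)).hasDerivAt
  refine ⟨pos, strictMonoOn_of_deriv_pos (convex_Ioi 0) ?_ ?_,
    contDiffOn.locallyLipschitzOn (convex_Ioi 0), growth⟩
  · exact contDiffOn.continuousOn.div continuousOn_id fun t ht ↦ (mem_Ioi.1 ht).ne'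
  · intro t ht
    have ht : 0 < t := by simpa using ht
    rw [((hasDerivAt ht).fun_div (hasDerivAt_id' t) ht.ne').deriv, mul_one]
    exact div_pos (sub_pos.2 ((div_lt_iff₀ ht).1 (deriv_bounds t ht).1)) (by positivity)

/-- The primitive `G(s) = ∫₀ˢ g` of the nonlinearity. -/
def primitive (g : ℝ → ℝ) (s : ℝ) : ℝ := ∫ x in (0 : ℝ)..s, g x

namespace IsSuperlinear

variable {g : ℝ → ℝ} {s t k : ℝ} (hg : IsSuperlinear g)

include hg

lemma strictMonoOn : StrictMonoOn g (Ioi 0) := by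
  intro s hs t ht hst
  have ratio := (div_lt_div_iff₀ hs ht).1 (hg.strictMonoOn_div hs ht hst)
  nlinarith [hg.pos s hs, hg.pos t ht, mem_Ioi.1 hs]

lemma apply_le_div_mul (hs : 0 < s) (hst : s ≤ t) : g s ≤ g t / t * s :=
  (div_le_iff₀ hs).1 (hg.strictMonoOn_div.monotoneOn hs (hs.trans_le hst) hst)

lemma mul_apply_lt (hs : 0 < s) (hk : 1 < k) : k * g s < g (k * s) := by
  have hks : 0 < k * s := mul_pos (one_pos.trans hk) hs
  have ratio := (div_lt_div_iff₀ hs hks).1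
    (hg.strictMonoOn_div hs hks (lt_mul_of_one_lt_left hs hk))
  exact lt_of_mul_lt_mul_right (by linarith) hs.le

lemma mul_apply_le (hs : 0 < s) (hk : 1 ≤ k) : k * g s ≤ g (k * s) := by
  rcases hk.eq_or_lt with rfl | hk
  · simp
  · exact (hg.mul_apply_lt hs hk).le

lemma exists_forall_le_of_apply_le_mul (D : ℝ) : ∃ M, ∀ t > 0, g t ≤ D * t → t ≤ M := by
  obtain ⟨q, c, hq, hc, growth⟩ := hg.exists_mul_rpow_le
  have unbounded : Tendsto (fun t : ℝ ↦ c * t ^ (q - 1)) atTop atTop :=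
    (tendsto_rpow_atTop (sub_pos.2 hq)).const_mul_atTop hc
  obtain ⟨M, hM⟩ := eventually_atTop.1 ((unbounded.eventually_gt_atTop D).and
    (eventually_ge_atTop 1))
  refine ⟨M, fun t ht hle ↦ ?_⟩
  by_contra! hMt
  obtain ⟨hD, h1⟩ := hM t hMt.le
  refine (growth t h1).not_gt (hle.trans_lt ?_)
  rw [rpow_sub_one ht.ne', ← mul_div_assoc] at hD
  exact (lt_div_iff₀ ht).1 hD

lemma intervalIntegrable (hs : 0 ≤ s) : IntervalIntegrable g MeasureTheory.volume 0 s := by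
  rw [intervalIntegrable_iff_integrableOn_Ioc_of_le hs]
  have continuousOn : ContinuousOn g (Ioc 0 s) :=
    hg.locallyLipschitzOn.continuousOn.mono fun x hx ↦ hx.1
  refine ⟨continuousOn.aestronglyMeasurable measurableSet_Ioc, .restrict_of_bounded (C := g s)
    (by simp) (MeasureTheory.ae_restrict_of_forall_mem measurableSet_Ioc fun x hx ↦ ?_)⟩
  rw [norm_of_nonneg (hg.pos x hx.1).le]
  exact hg.strictMonoOn.monotoneOn hx.1 (hx.1.trans_le hx.2) hx.2

lemma hasDerivAt_primitive (hs : 0 < s) : HasDerivAt (primitive g) (g s) s :=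
  intervalIntegral.integral_hasDerivAt_right (hg.intervalIntegrable hs.le)
    (hg.locallyLipschitzOn.continuousOn.stronglyMeasurableAtFilter isOpen_Ioi s hs)
    (hg.locallyLipschitzOn.continuousOn.continuousAt (Ioi_mem_nhds hs))

lemma primitive_pos (hs : 0 < s) : 0 < primitive g s :=
  intervalIntegral.intervalIntegral_pos_of_pos_on (hg.intervalIntegrable hs.le)
    (fun x hx ↦ hg.pos x hx.1) hs

lemma two_mul_primitive_lt (hs : 0 < s) : 2 * primitive g s < s * g s := by
  have slope_integrable : IntervalIntegrable (fun x ↦ g s / s * x) MeasureTheory.volume 0 s :=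
    (continuous_const.mul continuous_id).intervalIntegrable _ _
  have gap : 0 < ∫ x in (0 : ℝ)..s, (g s / s * x - g x) :=
    intervalIntegral.intervalIntegral_pos_of_pos_on
      (slope_integrable.sub (hg.intervalIntegrable hs.le))
      (fun x hx ↦ sub_pos.2 ((div_lt_iff₀ hx.1).1 (hg.strictMonoOn_div hx.1 hs hx.2))) hs
  rw [intervalIntegral.integral_sub slope_integrable (hg.intervalIntegrable hs.le),
    intervalIntegral.integral_const_mul, integral_id] at gap
  have area : g s / s * ((s ^ 2 - 0 ^ 2) / 2) = s * g s / 2 := by field_simp; ring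
  rw [primitive]
  linarith

lemma sq_mul_primitive_lt (hs : 0 < s) (hk : 1 < k) :
    k ^ 2 * primitive g s < primitive g (k * s) := by
  have k_pos : 0 < k := one_pos.trans hk
  have scaled : primitive g (k * s) = k * ∫ x in (0 : ℝ)..s, g (k * x) := by
    rw [intervalIntegral.mul_integral_comp_mul_left, mul_zero, primitive]
  have scaled_integrable : IntervalIntegrable (fun x ↦ g (k * x)) MeasureTheory.volume 0 s := by
    simpa [k_pos.ne'] using (hg.intervalIntegrable (mul_pos k_pos hs).le).comp_mul_left (c := k)
  have source_integrable := (hg.intervalIntegrable hs.le).const_mul k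
  have gap : 0 < ∫ x in (0 : ℝ)..s, (g (k * x) - k * g x) :=
    intervalIntegral.intervalIntegral_pos_of_pos_on (scaled_integrable.sub source_integrable)
      (fun x hx ↦ sub_pos.2 (hg.mul_apply_lt hx.1 hk)) hs
  rw [intervalIntegral.integral_sub scaled_integrable source_integrable,
    intervalIntegral.integral_const_mul] at gap
  rw [scaled, primitive]
  nlinarith

end IsSuperlinear

/-! ### Finite-time blow-up -/

lemma hasDerivAt_iteratedDeriv {n k : ℕ} {f : ℝ → ℝ} (hf : ContDiff ℝ n f) (hk : k < n) (t : ℝ) :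
    HasDerivAt (iteratedDeriv k f) (iteratedDeriv (k + 1) f t) t := by
  rw [iteratedDeriv_succ]
  exact (hf.differentiable_iteratedDeriv k (by exact_mod_cast hk) t).hasDerivAt

section BlowUp

variable {n : ℕ} {f : ℝ → ℝ} {t₀ : ℝ}

lemma mul_pow_le_iteratedDeriv {a δ : ℝ} (hf : ContDiff ℝ n f) (hδ : 0 ≤ δ)
    (nonneg : ∀ k < n, ∀ t ≥ t₀, 0 ≤ iteratedDeriv k f t)
    (ha : ∀ t ≥ t₀, a ≤ iteratedDeriv n f t) (j k : ℕ) (hjk : j + k = n) :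
    ∀ t ≥ t₀ + j * δ, a * δ ^ j ≤ iteratedDeriv k f t := by
  induction j generalizing k with
  | zero => obtain rfl : k = n := by omega
            simpa using ha
  | succ j ih =>
    intro t ht
    have hjδ : 0 ≤ j * δ := by positivity
    push_cast at ht
    have growth := add_mul_le_of_le_deriv (hasDerivAt_iteratedDeriv hf (k := k) (by omega))
      (sub_le_self t hδ) fun s hs ↦ ih (k + 1) (by omega) s (by linarith [hs.1])
    have start := nonneg k (by omega) (t - δ) (by linarith)
    rw [sub_sub_cancel, mul_assoc, ← pow_succ] at growth
    linarith

lemma exists_rpow_mul_half_pow_eq {c q : ℝ} (hn : n ≠ 0) (hc : 0 < c) (hq : 1 < q) :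
    ∃ K R : ℝ, 0 < K ∧ 1 < R ∧
      ∀ i : ℕ, c * (K * R ^ i) ^ q * ((1 / 2) ^ i) ^ n = K * R ^ (i + 1) := by
  have hρ : 0 < q - 1 := sub_pos.2 hq
  obtain ⟨R, hR, R_rpow⟩ : ∃ R : ℝ, 1 < R ∧ R ^ (q - 1) = 2 ^ n :=
    ⟨((2 : ℝ) ^ n) ^ (q - 1)⁻¹, one_lt_rpow (one_lt_pow₀ one_lt_two hn) (inv_pos.2 hρ),
      rpow_inv_rpow (by positivity) hρ.ne'⟩
  have R_pos : 0 < R := one_pos.trans hR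
  obtain ⟨K, K_pos, K_rpow⟩ : ∃ K : ℝ, 0 < K ∧ c * K ^ (q - 1) = R :=
    ⟨(R / c) ^ (q - 1)⁻¹, by positivity, by
      rw [rpow_inv_rpow (by positivity) hρ.ne', mul_div_cancel₀ _ hc.ne']⟩
  refine ⟨K, R, K_pos, hR, fun i ↦ ?_⟩
  have R_pow_rpow : (R ^ i) ^ (q - 1) = (2 ^ n) ^ i := by
    rw [← rpow_pow_comm R_pos.le, R_rpow]
  have halves : ((2 : ℝ) ^ n) ^ i * ((1 / 2) ^ i) ^ n = 1 := by
    rw [← pow_mul, ← pow_mul, mul_comm i n, ← mul_pow]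
    norm_num
  calc c * (K * R ^ i) ^ q * ((1 / 2) ^ i) ^ n
      = c * K ^ (q - 1) * (K * R ^ i) * ((R ^ i) ^ (q - 1) * ((1 / 2) ^ i) ^ n) := by
        rw [← sub_add_cancel q 1, rpow_add_one (by positivity), sub_add_cancel,
          mul_rpow K_pos.le (by positivity)]
        ring
    _ = K * R ^ (i + 1) := by rw [K_rpow, R_pow_rpow, halves]; ring

lemma false_of_tendsto_atTop_of_rpow_mul_pow_le {c q : ℝ} (hn : n ≠ 0) (hc : 0 < c) (hq : 1 < q)
    (mono : MonotoneOn f (Ici t₀)) (lim : Tendsto f atTop atTop)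
    (jump : ∀ t ≥ t₀, ∀ δ ≥ 0, c * f t ^ q * δ ^ n ≤ f (t + δ)) : False := by
  -- Above the level `K`, each time step half as long as the previous one multiplies `f` by `R`.
  obtain ⟨K, R, K_pos, hR, power_eq⟩ := exists_rpow_mul_half_pow_eq hn hc hq
  have : 0 < R := one_pos.trans hR
  obtain ⟨T, hKT, hT⟩ := ((lim.eventually_ge_atTop K).and (eventually_ge_atTop t₀)).exists
  have half_pow_le (i : ℕ) : (1 / 2 : ℝ) ^ i ≤ 1 := pow_le_one₀ (by norm_num) (by norm_num)
  have level (i : ℕ) : K * R ^ i ≤ f (T + 2 * (1 - (1 / 2) ^ i)) := by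
    induction i with
    | zero => simpa using hKT
    | succ i ih =>
      calc K * R ^ (i + 1) = c * (K * R ^ i) ^ q * ((1 / 2) ^ i) ^ n := (power_eq i).symm
        _ ≤ c * f (T + 2 * (1 - (1 / 2) ^ i)) ^ q * ((1 / 2) ^ i) ^ n := by gcongr
        _ ≤ f (T + 2 * (1 - (1 / 2) ^ i) + (1 / 2) ^ i) :=
          jump _ (by linarith [half_pow_le i]) _ (by positivity)
        _ = f (T + 2 * (1 - (1 / 2) ^ (i + 1))) := by ring_nf
  obtain ⟨i, hi⟩ := pow_unbounded_of_one_lt (f (T + 2) / K) hR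
  rw [div_lt_iff₀' K_pos] at hi
  refine hi.not_ge ((level i).trans (mono ?_ ?_ ?_))
  · exact hT.trans (by linarith [half_pow_le i])
  · exact hT.trans (by linarith)
  · linarith [show (0 : ℝ) < (1 / 2) ^ i by positivity]

lemma false_of_rpow_le_iteratedDeriv {c q : ℝ} (hn : 0 < n) (hf : ContDiff ℝ n f) (hc : 0 < c)
    (hq : 1 < q) (nonneg : ∀ k ≤ n, ∀ t ≥ t₀, 0 ≤ iteratedDeriv k f t)
    (growth : ∀ t ≥ t₀, c * f t ^ q ≤ iteratedDeriv n f t) (lim : Tendsto f atTop atTop) :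
    False := by
  have n_pos : (0 : ℝ) < n := Nat.cast_pos.2 hn
  have mono : MonotoneOn f (Ici t₀) := fun s hs t _ hst ↦ by
    have := hasDerivAt_iteratedDeriv hf hn
    rw [iteratedDeriv_zero] at this
    exact le_of_deriv_nonneg this hst fun r hr ↦ nonneg 1 hn r (hs.trans hr.1.le)
  refine false_of_tendsto_atTop_of_rpow_mul_pow_le (c := c / n ^ n) hn.ne' (by positivity) hq mono
    lim fun t ht δ hδ ↦ ?_
  have f_nonneg : 0 ≤ f t := by simpa using nonneg 0 hn.le t ht
  calc c / n ^ n * f t ^ q * δ ^ n = c * f t ^ q * (δ / n) ^ n := by rw [div_pow]; ring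
    _ ≤ iteratedDeriv 0 f (t + δ) := by
      refine mul_pow_le_iteratedDeriv hf (by positivity) (fun k hk s hs ↦ nonneg k hk.le s
        (ht.trans hs)) (fun s hs ↦ le_trans ?_ (growth s (ht.trans hs))) n 0 (add_zero n) _ ?_
      · have := mono ht (ht.trans hs) hs
        gcongr
      · rw [mul_div_cancel₀ _ n_pos.ne']
    _ = f (t + δ) := by rw [iteratedDeriv_zero]

end BlowUp

/-! ### Positive solutions and their reflections -/

/-- `v` is a positive `C⁴` solution of `v'''' - A v'' + B v = g(v)` on all of `ℝ`. -/
structure IsPosSol (A B : ℝ) (g v : ℝ → ℝ) : Prop where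
  contDiff : ContDiff ℝ 4 v
  pos : ∀ t, 0 < v t
  isSol : IsSol A B g v

/-- The second-order quantity `m² v - v''`. When `A = l² + m²` and `B = l² m²`, the equation
factors as `(D² - l²)(D² - m²) v = g(v)`, so that `y = m² v - v''` solves `y'' = l² y - g(v)`. -/
def residual (m : ℝ) (v : ℝ → ℝ) (t : ℝ) : ℝ := m ^ 2 * v t - iteratedDeriv 2 v t

namespace IsPosSol

section Basic

variable {A B : ℝ} {g v : ℝ → ℝ} (hv : IsPosSol A B g v)

include hv

lemma hasDerivAt (t : ℝ) : HasDerivAt v (deriv v t) t := by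
  simpa using hasDerivAt_iteratedDeriv hv.contDiff (k := 0) (by norm_num) t

lemma hasDerivAt_deriv (t : ℝ) : HasDerivAt (deriv v) (iteratedDeriv 2 v t) t := by
  simpa using hasDerivAt_iteratedDeriv hv.contDiff (k := 1) (by norm_num) t

lemma hasDerivAt_deriv2 (t : ℝ) : HasDerivAt (iteratedDeriv 2 v) (iteratedDeriv 3 v t) t :=
  hasDerivAt_iteratedDeriv hv.contDiff (k := 2) (by norm_num) t

lemma hasDerivAt_deriv3 (t : ℝ) :
    HasDerivAt (iteratedDeriv 3 v) (A * iteratedDeriv 2 v t - B * v t + g (v t)) t :=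
  (hasDerivAt_iteratedDeriv hv.contDiff (k := 3) (by norm_num) t).congr_deriv
    (by linarith [hv.isSol t])

lemma comp_const_sub (c : ℝ) : IsPosSol A B g fun t ↦ v (c - t) where
  contDiff := hv.contDiff.comp (contDiff_const.sub contDiff_id)
  pos _ := hv.pos _
  isSol t := by
    have := hv.isSol (c - t)
    rw [iteratedDeriv_comp_const_sub, iteratedDeriv_comp_const_sub]
    norm_num [this]

lemma comp_add_const (c : ℝ) : IsPosSol A B g fun t ↦ v (t + c) where
  contDiff := hv.contDiff.comp (contDiff_id.add contDiff_const)
  pos _ := hv.pos _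
  isSol t := by
    rw [iteratedDeriv_comp_add_const, iteratedDeriv_comp_add_const]
    exact hv.isSol (t + c)

end Basic

/-! ### A priori bounds -/

section Bounds

variable {l m : ℝ} {g v : ℝ → ℝ}

lemma hasDerivAt_residual (hv : IsPosSol (l ^ 2 + m ^ 2) (l ^ 2 * m ^ 2) g v) (t : ℝ) :
    HasDerivAt (residual m v) (m ^ 2 * deriv v t - iteratedDeriv 3 v t) t :=
  ((hv.hasDerivAt t).const_mul _).sub (hv.hasDerivAt_deriv2 t)

lemma hasDerivAt_deriv_residual (hv : IsPosSol (l ^ 2 + m ^ 2) (l ^ 2 * m ^ 2) g v) (t : ℝ) :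
    HasDerivAt (fun t ↦ m ^ 2 * deriv v t - iteratedDeriv 3 v t)
      (l ^ 2 * residual m v t - g (v t)) t :=
  (((hv.hasDerivAt_deriv t).const_mul _).sub (hv.hasDerivAt_deriv3 t)).congr_deriv
    (by rw [residual]; ring)

lemma residual_le_of_residual_neg (hv : IsPosSol (l ^ 2 + m ^ 2) (l ^ 2 * m ^ 2) g v)
    (hg : IsSuperlinear g) (hl : 0 ≤ l) {a t : ℝ} (neg : residual m v a < 0)
    (deriv_nonpos : m ^ 2 * deriv v a - iteratedDeriv 3 v a ≤ 0) (ht : a ≤ t) :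
    residual m v t ≤ residual m v a ∧ m ^ 2 * deriv v t - iteratedDeriv 3 v t ≤ 0 := by
  have hasDerivAt_neg (s : ℝ) := (hv.hasDerivAt_residual s).neg
  have deriv_nonneg (s : ℝ) (hs : a ≤ s) :=
    (pos_and_deriv_nonneg_of_sq_mul_le_deriv2 hasDerivAt_neg
      (fun s ↦ (hv.hasDerivAt_deriv_residual s).neg)
      (fun s ↦ by simp only [Pi.neg_apply]; linarith [hg.pos _ (hv.pos s)]) hl
      (neg_pos.2 neg) (neg_nonneg.2 deriv_nonpos) hs).2
  have mono := le_of_deriv_nonneg hasDerivAt_neg ht fun s hs ↦ deriv_nonneg s hs.1.le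
  exact ⟨neg_le_neg_iff.1 mono, neg_nonneg.1 (deriv_nonneg t ht)⟩

lemma false_of_residual_neg (hv : IsPosSol (l ^ 2 + m ^ 2) (l ^ 2 * m ^ 2) g v)
    (hg : IsSuperlinear g) (hl : 0 ≤ l) {a : ℝ} (neg : residual m v a < 0)
    (deriv_nonpos : m ^ 2 * deriv v a - iteratedDeriv 3 v a ≤ 0) : False := by
  have deriv2_ge (t : ℝ) (ht : a ≤ t) : m ^ 2 * v t - residual m v a ≤ iteratedDeriv 2 v t := by
    have := (hv.residual_le_of_residual_neg hg hl neg deriv_nonpos ht).1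
    simp only [residual] at *
    linarith
  have deriv2_pos (t : ℝ) (ht : a ≤ t) : -residual m v a ≤ iteratedDeriv 2 v t :=
    (deriv2_ge t ht).trans' (by linarith [mul_nonneg (sq_nonneg m) (hv.pos t).le])
  have deriv_lim : Tendsto (deriv v) atTop atTop :=
    tendsto_atTop_of_le_deriv hv.hasDerivAt_deriv (neg_pos.2 neg)
      ((eventually_ge_atTop a).mono deriv2_pos)
  have lim : Tendsto v atTop atTop :=
    tendsto_atTop_of_le_deriv hv.hasDerivAt one_pos (deriv_lim.eventually_ge_atTop 1)
  obtain ⟨q, c, hq, hc, growth⟩ := hg.exists_mul_rpow_le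
  obtain ⟨T, hT⟩ := eventually_atTop.1 ((eventually_ge_atTop a).and
    ((deriv_lim.eventually_ge_atTop 0).and (lim.eventually_ge_atTop 1)))
  have deriv4_ge (t : ℝ) (ht : T ≤ t) : g (v t) ≤ iteratedDeriv 4 v t := by
    have excess : 0 ≤ iteratedDeriv 2 v t - m ^ 2 * v t := by linarith [deriv2_ge t (hT t ht).1]
    have deriv2_nonneg : 0 ≤ iteratedDeriv 2 v t := by linarith [deriv2_pos t (hT t ht).1]
    linarith [hv.isSol t, mul_nonneg (sq_nonneg l) excess, mul_nonneg (sq_nonneg m) deriv2_nonneg]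
  refine false_of_rpow_le_iteratedDeriv (n := 4) (t₀ := T) (by norm_num) hv.contDiff hc hq
    (fun k hk t ht ↦ ?_) (fun t ht ↦ (growth _ (hT t ht).2.2).trans (deriv4_ge t ht)) lim
  obtain ⟨hat, deriv_nonneg, -⟩ := hT t ht
  interval_cases k
  · simpa using (hv.pos t).le
  · simpa using deriv_nonneg
  · exact (neg_pos.2 neg).le.trans (deriv2_pos t hat)
  · exact (mul_nonneg (sq_nonneg m) deriv_nonneg).trans
      (sub_nonpos.1 (hv.residual_le_of_residual_neg hg hl neg deriv_nonpos hat).2)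
  · exact (hg.pos _ (hv.pos t)).le.trans (deriv4_ge t ht)

lemma residual_nonneg (hv : IsPosSol (l ^ 2 + m ^ 2) (l ^ 2 * m ^ 2) g v)
    (hg : IsSuperlinear g) (hl : 0 ≤ l) (t : ℝ) : 0 ≤ residual m v t := by
  by_contra! neg
  rcases le_total (m ^ 2 * deriv v t - iteratedDeriv 3 v t) 0 with nonpos | nonneg
  · exact hv.false_of_residual_neg hg hl neg nonpos
  · refine (hv.comp_const_sub (t + t)).false_of_residual_neg hg hl (a := t) ?_ ?_
    · simpa [residual, iteratedDeriv_comp_const_sub] using neg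
    · norm_num [iteratedDeriv_comp_const_sub, deriv_comp_const_sub]
      linarith

lemma abs_deriv_le (hv : IsPosSol (l ^ 2 + m ^ 2) (l ^ 2 * m ^ 2) g v) (hg : IsSuperlinear g)
    (hl : 0 ≤ l) (hm : 0 ≤ m) (t : ℝ) : |deriv v t| ≤ m * v t :=
  abs_deriv_le_mul_of_deriv2_le hv.hasDerivAt hv.hasDerivAt_deriv hm (fun t ↦ (hv.pos t).le)
    (fun t ↦ sub_nonneg.1 (hv.residual_nonneg hg hl t)) t

lemma abs_deriv_residual_le (hv : IsPosSol (l ^ 2 + m ^ 2) (l ^ 2 * m ^ 2) g v)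
    (hg : IsSuperlinear g) (hl : 0 ≤ l) (t : ℝ) :
    |m ^ 2 * deriv v t - iteratedDeriv 3 v t| ≤ l * residual m v t :=
  abs_deriv_le_mul_of_deriv2_le hv.hasDerivAt_residual hv.hasDerivAt_deriv_residual hl
    (hv.residual_nonneg hg hl) (fun t ↦ sub_le_self _ (hg.pos _ (hv.pos t)).le) t

lemma exists_residual_le (hv : IsPosSol (l ^ 2 + m ^ 2) (l ^ 2 * m ^ 2) g v)
    (hg : IsSuperlinear g) (hl : 0 < l) (hm : 0 < m) : ∃ C, ∀ t, residual m v t ≤ C * v t := by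
  have gap : 0 < 1 - exp (-m) := sub_pos.2 (exp_lt_one_iff.2 (neg_neg_of_pos hm))
  refine ⟨2 * m ^ 2 / ((1 - exp (-m)) * exp (-l)), fun t ↦ ?_⟩
  have := mul_le_of_forall_Icc_le_source (f := residual m v) (a := exp (-l) * residual m v t)
    hv.hasDerivAt (fun s ↦ (hv.hasDerivAt_deriv s).congr_deriv (by rw [residual]; ring)) hm
    (fun s ↦ (hv.pos s).le) (hv.residual_nonneg hg hl.le)
    fun s hs ↦ exp_neg_mul_le_of_abs_deriv_le hv.hasDerivAt_residual hl
      (hv.abs_deriv_residual_le hg hl.le) hs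
  rwa [div_mul_eq_mul_div, le_div_iff₀' (by positivity), mul_assoc]

lemma exists_forall_le (hv : IsPosSol (l ^ 2 + m ^ 2) (l ^ 2 * m ^ 2) g v)
    (hg : IsSuperlinear g) (hl : 0 < l) (hm : 0 < m) : ∃ M, ∀ t, v t ≤ M := by
  have gap : 0 < 1 - exp (-l) := sub_pos.2 (exp_lt_one_iff.2 (neg_neg_of_pos hl))
  obtain ⟨C, hC⟩ := hv.exists_residual_le hg hl hm
  obtain ⟨M, hM⟩ :=
    hg.exists_forall_le_of_apply_le_mul (2 * l ^ 2 * C * exp m / (1 - exp (-l)))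
  refine ⟨M / exp (-m), fun t ↦ ?_⟩
  rw [le_div_iff₀' (exp_pos _)]
  have source_le := mul_le_of_forall_Icc_le_source (a := g (exp (-m) * v t))
    hv.hasDerivAt_residual hv.hasDerivAt_deriv_residual hl (hv.residual_nonneg hg hl.le)
    (fun s ↦ (hg.pos _ (hv.pos s)).le) fun s hs ↦ hg.strictMonoOn.monotoneOn
      (mul_pos (exp_pos _) (hv.pos t)) (hv.pos s)
      (exp_neg_mul_le_of_abs_deriv_le hv.hasDerivAt hm (hv.abs_deriv_le hg hl.le hm.le) hs)
  refine hM _ (mul_pos (exp_pos _) (hv.pos t)) ?_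
  rw [div_mul_eq_mul_div, le_div_iff₀' gap]
  calc (1 - exp (-l)) * g (exp (-m) * v t) ≤ 2 * l ^ 2 * residual m v t := source_le
    _ ≤ 2 * l ^ 2 * (C * v t) := by gcongr; exact hC t
    _ = 2 * l ^ 2 * C * exp m * (exp (-m) * v t) := by
      rw [exp_neg]; field_simp

lemma exists_abs_derivs_le (hv : IsPosSol (l ^ 2 + m ^ 2) (l ^ 2 * m ^ 2) g v)
    (hg : IsSuperlinear g) (hl : 0 < l) (hm : 0 < m) : ∃ C, ∀ t, |deriv v t| ≤ C * v t ∧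
      |iteratedDeriv 2 v t| ≤ C * v t ∧ |iteratedDeriv 3 v t| ≤ C * v t := by
  obtain ⟨C, hC⟩ := hv.exists_residual_le hg hl hm
  refine ⟨m + (m ^ 2 + C) + (m ^ 3 + l * C), fun t ↦ ?_⟩
  have v_pos := hv.pos t
  have deriv_le := hv.abs_deriv_le hg hl.le hm.le t
  have residual_nonneg := hv.residual_nonneg hg hl.le t
  have residual_le := hC t
  have deriv2_le : |iteratedDeriv 2 v t| ≤ m ^ 2 * v t + C * v t := by
    have : 0 ≤ m ^ 2 * v t := by positivity
    rw [residual] at residual_nonneg residual_le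
    exact abs_le.2 ⟨by linarith, by linarith⟩
  have deriv3_le : |iteratedDeriv 3 v t| ≤ m ^ 2 * (m * v t) + l * (C * v t) := by
    have scaled_le : |m ^ 2 * deriv v t| ≤ m ^ 2 * (m * v t) := by
      rw [abs_mul, abs_of_nonneg (sq_nonneg m)]
      gcongr
    have residual_deriv_le : |m ^ 2 * deriv v t - iteratedDeriv 3 v t| ≤ l * (C * v t) :=
      (hv.abs_deriv_residual_le hg hl.le t).trans (by gcongr)
    rw [abs_le] at *
    exact ⟨by linarith, by linarith⟩
  have C_mul_nonneg : 0 ≤ C * v t := residual_nonneg.trans residual_le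
  have terms_nonneg : 0 ≤ m * v t ∧ 0 ≤ m ^ 2 * v t ∧ 0 ≤ m ^ 2 * (m * v t) ∧ 0 ≤ l * (C * v t) :=
    ⟨by positivity, by positivity, by positivity, by positivity⟩
  exact ⟨by linarith, by linarith, by linarith⟩

end Bounds

/-! ### Comparison of two solutions -/

section Comparison

variable {l m k a : ℝ} {g v w : ℝ → ℝ}
  (hv : IsPosSol (l ^ 2 + m ^ 2) (l ^ 2 * m ^ 2) g v)
  (hw : IsPosSol (l ^ 2 + m ^ 2) (l ^ 2 * m ^ 2) g w) (hg : IsSuperlinear g) (hl : 0 < l)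
  (hm : 0 < m)

include hv hw hg hl hm

lemma false_of_le_of_lt (hk : 1 ≤ k) (eq : v a = k * w a) (deriv_eq : deriv v a = k * deriv w a)
    (deriv2_le : k * iteratedDeriv 2 w a ≤ iteratedDeriv 2 v a)
    (deriv3_le : k * iteratedDeriv 3 w a ≤ iteratedDeriv 3 v a)
    (lt : k * iteratedDeriv 2 w a < iteratedDeriv 2 v a ∨
      k * iteratedDeriv 3 w a < iteratedDeriv 3 v a) : False := by
  set z : ℝ → ℝ := fun t ↦ v t - k * w t
  set z₁ : ℝ → ℝ := fun t ↦ deriv v t - k * deriv w t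
  set z₂ : ℝ → ℝ := fun t ↦ iteratedDeriv 2 v t - k * iteratedDeriv 2 w t
  set z₃ : ℝ → ℝ := fun t ↦ iteratedDeriv 3 v t - k * iteratedDeriv 3 w t
  have hz (t : ℝ) : HasDerivAt z (z₁ t) t := (hv.hasDerivAt t).sub ((hw.hasDerivAt t).const_mul k)
  have hz₁ (t : ℝ) : HasDerivAt z₁ (z₂ t) t :=
    (hv.hasDerivAt_deriv t).sub ((hw.hasDerivAt_deriv t).const_mul k)
  have hz₂ (t : ℝ) : HasDerivAt z₂ (z₃ t) t :=
    (hv.hasDerivAt_deriv2 t).sub ((hw.hasDerivAt_deriv2 t).const_mul k)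
  have hz₃ (t : ℝ) : HasDerivAt z₃
      ((l ^ 2 + m ^ 2) * z₂ t - l ^ 2 * m ^ 2 * z t + (g (v t) - k * g (w t))) t :=
    ((hv.hasDerivAt_deriv3 t).sub ((hw.hasDerivAt_deriv3 t).const_mul k)).congr_deriv
      (by simp only [z, z₂]; ring)
  have source_nonneg (t : ℝ) (ht : 0 ≤ z t) : 0 ≤ g (v t) - k * g (w t) :=
    sub_nonneg.2 <| (hg.mul_apply_le (hw.pos t) hk).trans <| hg.strictMonoOn.monotoneOn
      (mul_pos (one_pos.trans_le hk) (hw.pos t)) (hv.pos t) (sub_nonneg.1 ht)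
  have lim : Tendsto z atTop atTop :=
    tendsto_atTop_of_deriv4_eq hz hz₁ hz₂ hz₃ source_nonneg hl hm (sub_eq_zero.2 eq)
      (sub_eq_zero.2 deriv_eq) (sub_nonneg.2 deriv2_le) (sub_nonneg.2 deriv3_le)
      (lt.imp sub_pos.2 sub_pos.2)
  obtain ⟨M, hM⟩ := hv.exists_forall_le hg hl hm
  obtain ⟨t, ht⟩ := (lim.eventually_gt_atTop M).exists
  exact ht.not_ge ((sub_le_self _ (mul_nonneg (zero_le_one.trans hk) (hw.pos t).le)).trans (hM t))

lemma deriv2_le_mul (hk : 1 ≤ k) (eq : v a = k * w a) (deriv_eq : deriv v a = k * deriv w a) :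
    iteratedDeriv 2 v a ≤ k * iteratedDeriv 2 w a := by
  by_contra! lt
  rcases le_total (k * iteratedDeriv 3 w a) (iteratedDeriv 3 v a) with le | le
  · exact hv.false_of_le_of_lt hw hg hl hm hk eq deriv_eq lt.le le (.inl lt)
  · refine (hv.comp_const_sub (a + a)).false_of_le_of_lt (a := a) (hw.comp_const_sub (a + a))
      hg hl hm hk ?_ ?_ ?_ ?_ (.inl ?_) <;>
    norm_num [iteratedDeriv_comp_const_sub, deriv_comp_const_sub] <;>
    linarith

lemma deriv3_le_of_eq (eq : v a = w a) (deriv_eq : deriv v a = deriv w a)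
    (deriv2_eq : iteratedDeriv 2 v a = iteratedDeriv 2 w a) :
    iteratedDeriv 3 v a ≤ iteratedDeriv 3 w a := by
  by_contra! lt
  exact hv.false_of_le_of_lt hw hg hl hm le_rfl (by rwa [one_mul]) (by rwa [one_mul])
    (by rw [one_mul, deriv2_eq]) (by simpa using lt.le) (.inr (by rwa [one_mul]))

end Comparison
end IsPosSol

/-! ### Uniqueness for the initial value problem -/

lemma eq_of_hasDerivAt_of_locallyLipschitzOn {E : Type*} [NormedAddCommGroup E] [NormedSpace ℝ E]
    {F : E → E} {U : Set E} (hU : IsOpen U) (hF : LocallyLipschitzOn U F) {x y : ℝ → E}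
    (hx : ∀ t, HasDerivAt x (F (x t)) t) (hy : ∀ t, HasDerivAt y (F (y t)) t)
    (hxU : ∀ t, x t ∈ U) {a : ℝ} (ha : x a = y a) : x = y := by
  have x_cont : Continuous x := continuous_iff_continuousAt.2 fun t ↦ (hx t).continuousAt
  have y_cont : Continuous y := continuous_iff_continuousAt.2 fun t ↦ (hy t).continuousAt
  have agree_isOpen : IsOpen {t | x t = y t} := by
    refine isOpen_iff_mem_nhds.2 fun t ht ↦ ?_
    obtain ⟨K, s, hs, lip⟩ := hF (hxU t)
    rw [hU.nhdsWithin_eq (hxU t)] at hs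
    exact ODE_solution_unique_of_eventually (v := fun _ ↦ F) (s := fun _ ↦ s) (K := K)
      (.of_forall fun _ ↦ lip)
      ((x_cont.continuousAt.eventually_mem hs).mono fun r hr ↦ ⟨hx r, hr⟩)
      ((y_cont.continuousAt.eventually_mem (ht ▸ hs)).mono fun r hr ↦ ⟨hy r, hr⟩) ht
  have agree_isClopen : IsClopen {t | x t = y t} := ⟨isClosed_eq x_cont y_cont, agree_isOpen⟩
  exact funext (eq_univ_iff_forall.1 (agree_isClopen.eq_univ ⟨a, ha⟩))

/-- The vector field of the first-order system satisfied by `(v, v', v'', v''')`. -/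
def phaseField (A B : ℝ) (g : ℝ → ℝ) (x : ℝ × ℝ × ℝ × ℝ) : ℝ × ℝ × ℝ × ℝ :=
  (x.2.1, x.2.2.1, x.2.2.2, A * x.2.2.1 - B * x.1 + g x.1)

lemma locallyLipschitzOn_phaseField (A B : ℝ) {g : ℝ → ℝ} {s : Set ℝ}
    (hg : LocallyLipschitzOn s g) : LocallyLipschitzOn (Prod.fst ⁻¹' s) (phaseField A B g) := by
  have linear_part : LocallyLipschitz fun x : ℝ × ℝ × ℝ × ℝ ↦
      (x.2.1, x.2.2.1, x.2.2.2, A * x.2.2.1 - B * x.1) :=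
    ContDiff.locallyLipschitz (𝕂 := ℝ) (by fun_prop)
  have nonlinear_part : LocallyLipschitzOn (Prod.fst ⁻¹' s) fun x : ℝ × ℝ × ℝ × ℝ ↦
      ((0, 0, 0, g x.1) : ℝ × ℝ × ℝ × ℝ) := by
    intro x hx
    obtain ⟨K, t, ht, lip⟩ := hg hx
    refine ⟨K, Prod.fst ⁻¹' t, continuous_fst.continuousWithinAt.preimage_mem_nhdsWithin' ?_, ?_⟩
    · exact nhdsWithin_mono _ (image_preimage_subset _ _) ht
    · intro y hy z hz
      simpa [Prod.edist_eq] using (lip hy hz).trans (by gcongr; exact le_max_left _ _)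
  have sum := linear_part.locallyLipschitzOn.add nonlinear_part
  simp only [Prod.mk_add_mk, add_zero] at sum
  exact sum

namespace IsPosSol

section Uniqueness

lemma eq_of_phase_eq {A B a : ℝ} {g v w : ℝ → ℝ} (hv : IsPosSol A B g v) (hw : IsPosSol A B g w)
    (hg : LocallyLipschitzOn (Ioi 0) g) (eq : v a = w a) (deriv_eq : deriv v a = deriv w a)
    (deriv2_eq : iteratedDeriv 2 v a = iteratedDeriv 2 w a)
    (deriv3_eq : iteratedDeriv 3 v a = iteratedDeriv 3 w a) : v = w := by
  have hasDerivAt_phase {u : ℝ → ℝ} (hu : IsPosSol A B g u) (t : ℝ) :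
      HasDerivAt (fun s ↦ (u s, deriv u s, iteratedDeriv 2 u s, iteratedDeriv 3 u s))
        (phaseField A B g (u t, deriv u t, iteratedDeriv 2 u t, iteratedDeriv 3 u t)) t :=
    (hu.hasDerivAt t).prodMk <| (hu.hasDerivAt_deriv t).prodMk <|
      (hu.hasDerivAt_deriv2 t).prodMk (hu.hasDerivAt_deriv3 t)
  have phases_eq := eq_of_hasDerivAt_of_locallyLipschitzOn (isOpen_Ioi.preimage continuous_fst)
    (locallyLipschitzOn_phaseField A B hg) (hasDerivAt_phase hv) (hasDerivAt_phase hw) hv.pos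
    (a := a) (by rw [eq, deriv_eq, deriv2_eq, deriv3_eq])
  exact funext fun t ↦ congr_arg Prod.fst (congr_fun phases_eq t)

variable {l m a : ℝ} {g v w : ℝ → ℝ}

lemma eq_of_deriv_eq (hv : IsPosSol (l ^ 2 + m ^ 2) (l ^ 2 * m ^ 2) g v)
    (hw : IsPosSol (l ^ 2 + m ^ 2) (l ^ 2 * m ^ 2) g w) (hg : IsSuperlinear g) (hl : 0 < l)
    (hm : 0 < m) (eq : v a = w a) (deriv_eq : deriv v a = deriv w a) : v = w := by
  have deriv2_le := hv.deriv2_le_mul hw hg hl hm le_rfl (by rwa [one_mul]) (by rwa [one_mul])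
  have deriv2_ge := hw.deriv2_le_mul hv hg hl hm le_rfl (a := a) (by rw [one_mul, eq])
    (by rw [one_mul, deriv_eq])
  rw [one_mul] at deriv2_le deriv2_ge
  have deriv2_eq := le_antisymm deriv2_le deriv2_ge
  exact hv.eq_of_phase_eq hw hg.locallyLipschitzOn eq deriv_eq deriv2_eq <| le_antisymm
    (hv.deriv3_le_of_eq hw hg hl hm eq deriv_eq deriv2_eq)
    (hw.deriv3_le_of_eq hv hg hl hm eq.symm deriv_eq.symm deriv2_eq.symm)

lemma comp_const_sub_eq_of_deriv_eq_zero (hv : IsPosSol (l ^ 2 + m ^ 2) (l ^ 2 * m ^ 2) g v)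
    (hg : IsSuperlinear g) (hl : 0 < l) (hm : 0 < m) (ha : deriv v a = 0) (t : ℝ) :
    v (a + a - t) = v t :=
  congr_fun ((hv.comp_const_sub (a + a)).eq_of_deriv_eq hv hg hl hm (a := a) (by simp)
    (by simp [deriv_comp_const_sub, ha])) t

end Uniqueness

/-! ### The conserved energy -/

/-- The conserved Hamiltonian of `v'''' - A v'' + B v = g(v)`. -/
def energy (A B : ℝ) (g v : ℝ → ℝ) (t : ℝ) : ℝ :=
  iteratedDeriv 3 v t * deriv v t - iteratedDeriv 2 v t ^ 2 / 2 - A / 2 * deriv v t ^ 2 +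
    B / 2 * v t ^ 2 - primitive g (v t)

section Energy

lemma energy_eq {A B : ℝ} {g v : ℝ → ℝ} (hv : IsPosSol A B g v) (hg : IsSuperlinear g)
    (s t : ℝ) : energy A B g v s = energy A B g v t := by
  have hasDerivAt_energy (t : ℝ) : HasDerivAt (energy A B g v) 0 t := by
    have h₁ := hv.hasDerivAt_deriv t
    have h₂ := hv.hasDerivAt_deriv2 t
    have hG := (hg.hasDerivAt_primitive (hv.pos t)).comp t (hv.hasDerivAt t)
    refine ((((((hv.hasDerivAt_deriv3 t).mul h₁).sub ((h₂.pow 2).div_const 2)).sub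
      ((h₁.pow 2).const_mul (A / 2))).add (((hv.hasDerivAt t).pow 2).const_mul (B / 2))).sub
      hG).congr_deriv ?_
    ring
  exact is_const_of_deriv_eq_zero (fun t ↦ (hasDerivAt_energy t).differentiableAt)
    (fun t ↦ (hasDerivAt_energy t).deriv) s t

variable {l m : ℝ} {g v : ℝ → ℝ}
  (hv : IsPosSol (l ^ 2 + m ^ 2) (l ^ 2 * m ^ 2) g v)
  (hg : IsSuperlinear g) (hl : 0 < l) (hm : 0 < m)

include hv hg hl hm

lemma exists_abs_energy_le :
    ∃ K, ∀ t, |energy (l ^ 2 + m ^ 2) (l ^ 2 * m ^ 2) g v t| ≤ K * v t ^ 2 := by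
  obtain ⟨M, hM⟩ := hv.exists_forall_le hg hl hm
  obtain ⟨C, hC⟩ := hv.exists_abs_derivs_le hg hl hm
  set A := l ^ 2 + m ^ 2
  set B := l ^ 2 * m ^ 2
  refine ⟨C ^ 2 + C ^ 2 / 2 + A / 2 * C ^ 2 + B / 2 + g M / M / 2, fun t ↦ ?_⟩
  obtain ⟨deriv_le, deriv2_le, deriv3_le⟩ := hC t
  have v_pos := hv.pos t
  have product_le : |iteratedDeriv 3 v t * deriv v t| ≤ C ^ 2 * v t ^ 2 := by
    rw [abs_mul, ← mul_pow, sq]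
    exact mul_le_mul deriv3_le deriv_le (abs_nonneg _) ((abs_nonneg _).trans deriv3_le)
  have deriv_sq_le : A / 2 * deriv v t ^ 2 ≤ A / 2 * (C ^ 2 * v t ^ 2) := by
    rw [← mul_pow, ← sq_abs (deriv v t)]
    gcongr
  have deriv2_sq_le : iteratedDeriv 2 v t ^ 2 ≤ C ^ 2 * v t ^ 2 := by
    rw [← mul_pow, ← sq_abs]
    gcongr
  have primitive_le : primitive g (v t) ≤ g M / M / 2 * v t ^ 2 := by
    have := mul_le_mul_of_nonneg_left (hg.apply_le_div_mul v_pos (hM t)) v_pos.le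
    linarith [hg.two_mul_primitive_lt v_pos]
  have primitive_pos := hg.primitive_pos v_pos
  have A_term : 0 ≤ A / 2 * deriv v t ^ 2 := by positivity
  have B_term : 0 ≤ B / 2 * v t ^ 2 := by positivity
  have C_term : 0 ≤ C ^ 2 * v t ^ 2 := by positivity
  have := abs_le.1 product_le
  rw [energy, abs_le]
  constructor <;> linarith [sq_nonneg (iteratedDeriv 2 v t)]

lemma energy_eq_zero (hinf : (⨅ t, v t) = 0) (t : ℝ) :
    energy (l ^ 2 + m ^ 2) (l ^ 2 * m ^ 2) g v t = 0 := by
  obtain ⟨K, hK⟩ := hv.exists_abs_energy_le hg hl hm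
  obtain ⟨u, -, u_lim, u_mem⟩ := exists_seq_tendsto_sInf (range_nonempty v)
    ⟨0, forall_mem_range.2 fun t ↦ (hv.pos t).le⟩
  rw [← iInf, hinf] at u_lim
  have bound (n : ℕ) : |energy (l ^ 2 + m ^ 2) (l ^ 2 * m ^ 2) g v t| ≤ K * u n ^ 2 := by
    obtain ⟨s, hs⟩ := u_mem n
    rw [hv.energy_eq hg t s, ← hs]
    exact hK s
  have bound_lim : Tendsto (fun n ↦ K * u n ^ 2) atTop (nhds 0) := by
    simpa using (u_lim.pow 2).const_mul K
  exact abs_nonpos_iff.1 (ge_of_tendsto' bound_lim bound)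

lemma deriv2_sq_eq (hinf : (⨅ t, v t) = 0) {a : ℝ} (ha : deriv v a = 0) :
    iteratedDeriv 2 v a ^ 2 = l ^ 2 * m ^ 2 * v a ^ 2 - 2 * primitive g (v a) := by
  have := hv.energy_eq_zero hg hl hm hinf a
  rw [energy, ha] at this
  linarith

end Energy

/-! ### Existence of a local maximum -/

section Critical

lemma apply_eq_mul_of_tendsto {A B K L : ℝ} {g v : ℝ → ℝ} (hv : IsPosSol A B g v)
    (hg : ContinuousAt g L) (deriv_le : ∀ t, |deriv v t| ≤ K)
    (deriv3_le : ∀ t, |iteratedDeriv 3 v t| ≤ K) (lim : Tendsto v atTop (nhds L)) :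
    g L = B * L := by
  have hasDerivAt_diff (t : ℝ) : HasDerivAt (fun t ↦ iteratedDeriv 3 v t - A * deriv v t)
      (g (v t) - B * v t) t :=
    ((hv.hasDerivAt_deriv3 t).sub ((hv.hasDerivAt_deriv t).const_mul A)).congr_deriv (by ring)
  have bound (t : ℝ) : |iteratedDeriv 3 v t - A * deriv v t| ≤ K + |A| * K := by
    refine (abs_sub _ _).trans ?_
    rw [abs_mul]
    gcongr
    exacts [deriv3_le t, deriv_le t]
  exact sub_eq_zero.1 <| eq_zero_of_tendsto_deriv_of_bounded hasDerivAt_diff bound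
    ((hg.tendsto.comp lim).sub (lim.const_mul B))

variable {l m : ℝ} {g v : ℝ → ℝ}
  (hv : IsPosSol (l ^ 2 + m ^ 2) (l ^ 2 * m ^ 2) g v)
  (hg : IsSuperlinear g) (hl : 0 < l) (hm : 0 < m)

include hv hg hl hm

lemma exists_forall_abs_le :
    ∃ K, ∀ t, v t ≤ K ∧ |deriv v t| ≤ K ∧ |iteratedDeriv 2 v t| ≤ K ∧
      |iteratedDeriv 3 v t| ≤ K := by
  obtain ⟨M, hM⟩ := hv.exists_forall_le hg hl hm
  obtain ⟨C, hC⟩ := hv.exists_abs_derivs_le hg hl hm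
  have C_nonneg : 0 ≤ C :=
    nonneg_of_mul_nonneg_left ((abs_nonneg _).trans (hC 0).1) (hv.pos 0)
  have bound {x t : ℝ} (hx : x ≤ C * v t) : x ≤ max M (C * M) :=
    hx.trans <| (mul_le_mul_of_nonneg_left (hM t) C_nonneg).trans (le_max_right _ _)
  exact ⟨max M (C * M), fun t ↦ ⟨(hM t).trans (le_max_left _ _), bound (hC t).1,
    bound (hC t).2.1, bound (hC t).2.2⟩⟩

lemma exists_tendsto_of_deriv_pos (deriv_pos : ∀ t, 0 < deriv v t) :
    ∃ L > 0, Tendsto v atTop (nhds L) := by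
  obtain ⟨M, hM⟩ := hv.exists_forall_le hg hl hm
  have bddAbove : BddAbove (range v) := ⟨M, forall_mem_range.2 hM⟩
  exact ⟨⨆ t, v t, (hv.pos 0).trans_le (le_ciSup bddAbove 0),
    tendsto_atTop_ciSup (strictMono_of_deriv_pos deriv_pos).monotone bddAbove⟩

-- The right-hand side is the derivative of `v'' v' + (3 + l² + m²) K v`.
lemma mul_sq_sub_primitive_le (hinf : (⨅ t, v t) = 0) {K t : ℝ} (deriv_nonneg : 0 ≤ deriv v t)
    (deriv_le : |deriv v t| ≤ K) (deriv3_le : |iteratedDeriv 3 v t| ≤ K) :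
    l ^ 2 * m ^ 2 * v t ^ 2 - 2 * primitive g (v t) ≤ iteratedDeriv 3 v t * deriv v t +
      iteratedDeriv 2 v t * iteratedDeriv 2 v t + (3 + (l ^ 2 + m ^ 2)) * K * deriv v t := by
  have conserved := hv.energy_eq_zero hg hl hm hinf t
  rw [energy] at conserved
  have deriv3_ge : -K * deriv v t ≤ iteratedDeriv 3 v t * deriv v t := by
    gcongr
    exact (abs_le.1 deriv3_le).1
  have deriv_sq_le : (l ^ 2 + m ^ 2) * (deriv v t * deriv v t) ≤
      (l ^ 2 + m ^ 2) * (K * deriv v t) := by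
    gcongr
    exact (abs_le.1 deriv_le).2
  linarith

lemma false_of_forall_deriv_pos (hinf : (⨅ t, v t) = 0) (deriv_pos : ∀ t, 0 < deriv v t) :
    False := by
  obtain ⟨L, L_pos, lim⟩ := hv.exists_tendsto_of_deriv_pos hg hl hm deriv_pos
  obtain ⟨K, hK⟩ := hv.exists_forall_abs_le hg hl hm
  have g_L := hv.apply_eq_mul_of_tendsto
    (hg.locallyLipschitzOn.continuousOn.continuousAt (Ioi_mem_nhds L_pos))
    (fun t ↦ (hK t).2.1) (fun t ↦ (hK t).2.2.2) lim
  set A := l ^ 2 + m ^ 2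
  set B := l ^ 2 * m ^ 2
  have gap_lim : Tendsto (fun t ↦ B * v t ^ 2 - 2 * primitive g (v t)) atTop
      (nhds (B * L ^ 2 - 2 * primitive g L)) :=
    ((lim.pow 2).const_mul B).sub
      (((hg.hasDerivAt_primitive L_pos).continuousAt.tendsto.comp lim).const_mul 2)
  have gap_pos : 0 < B * L ^ 2 - 2 * primitive g L := by
    linarith [hg.two_mul_primitive_lt L_pos, congr_arg (L * ·) g_L]
  let F : ℝ → ℝ := fun t ↦ iteratedDeriv 2 v t * deriv v t + (3 + A) * K * v t
  have hasDerivAt_F (t : ℝ) : HasDerivAt F (iteratedDeriv 3 v t * deriv v t +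
      iteratedDeriv 2 v t * iteratedDeriv 2 v t + (3 + A) * K * deriv v t) t :=
    ((hv.hasDerivAt_deriv2 t).mul (hv.hasDerivAt_deriv t)).add ((hv.hasDerivAt t).const_mul _)
  have F_lim : Tendsto F atTop atTop :=
    tendsto_atTop_of_le_deriv hasDerivAt_F (half_pos gap_pos) <|
      (gap_lim.eventually_const_lt (half_lt_self gap_pos)).mono fun t ht ↦
        ht.le.trans (hv.mul_sq_sub_primitive_le hg hl hm hinf (deriv_pos t).le
          (hK t).2.1 (hK t).2.2.2)
  obtain ⟨t, ht⟩ := (F_lim.eventually_gt_atTop (K * K + (3 + A) * K * K)).exists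
  obtain ⟨v_le, deriv_le, deriv2_le, -⟩ := hK t
  have K_nonneg : 0 ≤ K := (hv.pos t).le.trans v_le
  refine ht.not_ge (add_le_add ?_ (by gcongr))
  exact (le_abs_self _).trans ((abs_mul _ _).trans_le
    (mul_le_mul deriv2_le deriv_le (abs_nonneg _) K_nonneg))

lemma exists_deriv_eq_zero (hinf : (⨅ t, v t) = 0) : ∃ t, deriv v t = 0 := by
  by_contra! ne
  rcases hasDerivWithinAt_forall_lt_or_forall_gt_of_forall_ne convex_univ
    (fun t _ ↦ (hv.hasDerivAt t).hasDerivWithinAt) (fun t _ ↦ ne t) with neg | pos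
  · refine (hv.comp_const_sub 0).false_of_forall_deriv_pos hg hl hm
      (((Equiv.subLeft (0 : ℝ)).iInf_comp (g := v)).trans hinf) fun t ↦ ?_
    rw [deriv_comp_const_sub]
    exact neg_pos.2 (neg (0 - t) trivial)
  · exact hv.false_of_forall_deriv_pos hg hl hm hinf fun t ↦ pos t trivial

lemma exists_isLocalMax (hinf : (⨅ t, v t) = 0) : ∃ a, IsLocalMax v a := by
  obtain ⟨t₀, ht₀⟩ := hv.exists_deriv_eq_zero hg hl hm hinf
  obtain ⟨s, hs⟩ := exists_lt_of_ciInf_lt (hinf.trans_lt (hv.pos t₀))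
  have symm := hv.comp_const_sub_eq_of_deriv_eq_zero hg hl hm ht₀ s
  have endpoints (t : ℝ) (ht : |t - t₀| = |s - t₀|) : v t < v t₀ := by
    rcases abs_eq_abs.1 ht with h | h
    · rwa [sub_left_injective h]
    · rwa [show t = t₀ + t₀ - s by linarith, symm]
  obtain ⟨a, -, ha⟩ := (isCompact_closedBall t₀ |s - t₀|).exists_isLocalMax_mem_open
    Metric.ball_subset_closedBall hv.contDiff.continuous.continuousOn
    (Metric.mem_closedBall_self (abs_nonneg _))
    (fun t ht ↦ endpoints t <| by simpa using ht) Metric.isOpen_ball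
  exact ⟨a, ha⟩

end Critical

/-! ### Uniqueness up to translation -/

section Translation

variable {l m a : ℝ} {g v w : ℝ → ℝ}
  (hv : IsPosSol (l ^ 2 + m ^ 2) (l ^ 2 * m ^ 2) g v)
  (hw : IsPosSol (l ^ 2 + m ^ 2) (l ^ 2 * m ^ 2) g w) (hg : IsSuperlinear g) (hl : 0 < l)
  (hm : 0 < m) (hvinf : (⨅ t, v t) = 0) (hwinf : (⨅ t, w t) = 0)

include hv hw hg hl hm hvinf hwinf

lemma le_of_isLocalMax (hva : IsLocalMax v a) (hwa : IsLocalMax w a) : v a ≤ w a := by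
  by_contra! lt
  have w_pos := hw.pos a
  obtain ⟨k, hk, v_eq⟩ : ∃ k > 1, v a = k * w a :=
    ⟨v a / w a, (one_lt_div w_pos).2 lt, (div_mul_cancel₀ _ w_pos.ne').symm⟩
  have deriv2_sq_lt : iteratedDeriv 2 v a ^ 2 < (k * iteratedDeriv 2 w a) ^ 2 := by
    rw [mul_pow, hv.deriv2_sq_eq hg hl hm hvinf hva.deriv_eq_zero,
      hw.deriv2_sq_eq hg hl hm hwinf hwa.deriv_eq_zero, v_eq]
    linarith [hg.sq_mul_primitive_lt w_pos hk]
  have deriv2_le : iteratedDeriv 2 v a ≤ k * iteratedDeriv 2 w a :=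
    hv.deriv2_le_mul hw hg hl hm hk.le v_eq (by simp [hva.deriv_eq_zero, hwa.deriv_eq_zero])
  have deriv2_w_nonpos : k * iteratedDeriv 2 w a ≤ 0 :=
    mul_nonpos_of_nonneg_of_nonpos (one_pos.trans hk).le
      (iteratedDeriv_two_nonpos_of_isLocalMax hw.contDiff.continuous.continuousAt hwa)
  nlinarith

lemma eq_of_isLocalMax (hva : IsLocalMax v a) (hwa : IsLocalMax w a) : v = w :=
  hv.eq_of_deriv_eq hw hg hl hm
    (le_antisymm (hv.le_of_isLocalMax hw hg hl hm hvinf hwinf hva hwa)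
      (hw.le_of_isLocalMax hv hg hl hm hwinf hvinf hwa hva))
    (hva.deriv_eq_zero.trans hwa.deriv_eq_zero.symm)

lemma exists_eq_comp_add_const : ∃ τ, ∀ t, w t = v (t + τ) := by
  obtain ⟨a, ha⟩ := hv.exists_isLocalMax hg hl hm hvinf
  obtain ⟨b, hb⟩ := hw.exists_isLocalMax hg hl hm hwinf
  refine ⟨a - b, congr_fun (eq_of_isLocalMax (a := b) hw (hv.comp_add_const (a - b)) hg hl hm
    hwinf (((Equiv.addRight (a - b)).iInf_comp (g := v)).trans hvinf) hb ?_)⟩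
  have shift : Tendsto (fun t ↦ t + (a - b)) (nhds b) (nhds a) :=
    tendsto_id.add_const (a - b) |>.trans_eq (by simp)
  filter_upwards [shift.eventually ha] with t ht
  rwa [add_sub_cancel]

end Translation

end IsPosSol

lemma exists_sq_add_sq_eq_and_sq_mul_sq_eq {A B : ℝ} (hA : 0 < A) (hB : 0 < B)
    (hAB : 4 * B ≤ A ^ 2) :
    ∃ l m : ℝ, 0 < l ∧ 0 < m ∧ A = l ^ 2 + m ^ 2 ∧ B = l ^ 2 * m ^ 2 := by
  have disc_sq : √(A ^ 2 - 4 * B) ^ 2 = A ^ 2 - 4 * B := sq_sqrt (by linarith)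
  have disc_lt : √(A ^ 2 - 4 * B) < A := (sqrt_lt' hA).2 (by linarith)
  have large_pos : 0 < (A + √(A ^ 2 - 4 * B)) / 2 := by positivity
  have small_pos : 0 < (A - √(A ^ 2 - 4 * B)) / 2 := by linarith
  refine ⟨√((A + √(A ^ 2 - 4 * B)) / 2), √((A - √(A ^ 2 - 4 * B)) / 2), sqrt_pos.2 large_pos,
    sqrt_pos.2 small_pos, ?_, ?_⟩ <;>
  rw [sq_sqrt large_pos.le, sq_sqrt small_pos.le] <;>
  linarith

end FourthOrderODE

open FourthOrderODE in
theorem stmt_6_general {A B : ℝ} (hA : 0 < A) (hB : 0 < B) (hAB : 4 * B ≤ A ^ 2) {g : ℝ → ℝ}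
    (hg : IsSuperlinear g) {v w : ℝ → ℝ} (hv : IsPosSol A B g v) (hw : IsPosSol A B g w)
    (hvinf : (⨅ t, v t) = 0) (hwinf : (⨅ t, w t) = 0) : ∃ τ, ∀ t, w t = v (t + τ) := by
  obtain ⟨l, m, hl, hm, rfl, rfl⟩ := exists_sq_add_sq_eq_and_sq_mul_sq_eq hA hB hAB
  exact hv.exists_eq_comp_add_const hw hg hl hm hvinf hwinf

theorem stmt_6 (n : ℕ) (hn : 5 ≤ n) (g : ℝ → ℝ) (hg : CondG n g)
    (A B : ℝ) (hA : A = ((n : ℝ) * ((n : ℝ) - 4) + 8) / 2)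
    (hB : B = (n : ℝ) ^ 2 * ((n : ℝ) - 4) ^ 2 / 16)
    (v w : ℝ → ℝ) (hv4 : ContDiff ℝ 4 v) (hw4 : ContDiff ℝ 4 w)
    (hvpos : ∀ t, 0 < v t) (hwpos : ∀ t, 0 < w t)
    (hvsol : IsSol A B g v) (hwsol : IsSol A B g w)
    (hvinf : (⨅ t : ℝ, v t) = 0) (hwinf : (⨅ t : ℝ, w t) = 0) :
    ∃ τ : ℝ, ∀ t, w t = v (t + τ) := by
  have n_ge : (5 : ℝ) ≤ n := by exact_mod_cast hn
  have n_sub_pos : (0 : ℝ) < n - 4 := by linarith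
  refine stmt_6_general ?_ ?_ ?_ (FourthOrderODE.isSuperlinear_of_condG hg) ⟨hv4, hvpos, hvsol⟩
    ⟨hw4, hwpos, hwsol⟩ hvinf hwinf
  · rw [hA]; positivity
  · rw [hB]; positivity
  · rw [hA, hB]; linarith [sq_nonneg ((n : ℝ) - 2)]
end
end

section
/- Let v : ℝ → ℝ be a C⁴ positive solution of the ODE v''''(t) − A·v''(t) + B·v(t) = g(v(t)) with v(t) → 0 as |t| → ∞, and assume in addition there exist r > 1 and C < ∞ such that |g(t) − β·t| ≤ C·t^r for all t ∈ (0, 1]. Then the limits lim_{t→+∞} e^{√μ·t}·v(t) and lim_{t→−∞} e^{−√μ·t}·v(t) exist and are finite, where μ = (A − √(A² − 4(B − β)))/2 and β = lim_{t→0⁺} g'(t). If moreover g(t) ≥ β·t for all t > 0, then these limits are positive. -/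
open Real Filter Set

noncomputable section

/-!
Linearizing at `0` and writing `A = a² + b²`, `B - β = a² b²` with `a = √μ < b`, the equation
becomes `(D² - a²)(D² - b²) v = f` with `f = g(v) - β v = O(v ^ r)`. Everything rests on one
comparison principle: if `u'' ≥ k² u` near `+∞`, then either `u → +∞` or `e^{kt} u` is
nonincreasing.

Since `f = o(v)`, comparison applied to both factors shows that `v` decays like `e^{-a't}` for every
`a' < a`; taking `a'` close to `a` makes `f` decay like `e^{-σt}` with `σ > a`. Solving the two
second-order equations in turn, `e^{at}(v'' - b² v)` converges to some `W`, and then `e^{at} v`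
converges to `-W / (b² - a²)`.

If `f ≥ 0`, then `e^{at}(v'' - b² v)` is nonincreasing on the whole line, so `W ≥ 0` would give
`v'' ≥ b² v` everywhere; as `v` vanishes at both ends, this contradicts `v > 0`. The limit at `-∞`
follows by reflection `t ↦ -t`.
-/

open Asymptotics Topology

lemma exists_tendsto_atTop_of_monotoneOn_Ici {α β : Type*} [LinearOrder α]
    [ConditionallyCompleteLinearOrder β] [TopologicalSpace β] [OrderTopology β] {f : α → β} {a : α}
    (hf : MonotoneOn f (Ici a)) (hbdd : BddAbove (f '' Ici a)) : ∃ l, Tendsto f atTop (𝓝 l) := by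
  have hmono : Monotone fun t => f (max a t) := fun s t hst =>
    hf (le_max_left a s) (le_max_left a t) (max_le_max_left a hst)
  have hrange : BddAbove (range fun t => f (max a t)) :=
    hbdd.mono (range_subset_iff.2 fun t => mem_image_of_mem f (le_max_left a t))
  refine ⟨_, (tendsto_atTop_ciSup hmono hrange).congr' ?_⟩
  filter_upwards [eventually_ge_atTop a] with t ht
  rw [max_eq_right ht]

lemma tendsto_exp_neg_mul_atTop {k : ℝ} (hk : 0 < k) :
    Tendsto (fun t => exp (-k * t)) atTop (𝓝 0) :=
  tendsto_exp_atBot.comp (tendsto_id.const_mul_atTop_of_neg (neg_neg_of_pos hk))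

lemma isLittleO_rpow_id_nhdsGT_zero {r : ℝ} (hr : 1 < r) :
    (fun x : ℝ => x ^ r) =o[𝓝[>] 0] fun x => x := by
  have hpow : Tendsto (fun x : ℝ => x ^ (r - 1)) (𝓝[>] 0) (𝓝 0) :=
    tendsto_nhdsWithin_of_tendsto_nhds <| by
      simpa [zero_rpow (sub_pos.2 hr).ne'] using
        (continuousAt_rpow_const 0 (r - 1) (Or.inr (sub_pos.2 hr).le)).tendsto
  refine (isLittleO_iff_tendsto' ?_).2 (hpow.congr' ?_)
  · filter_upwards [self_mem_nhdsWithin] with x (hx : 0 < x) h₀ using absurd h₀ hx.ne'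
  · filter_upwards [self_mem_nhdsWithin] with x (hx : 0 < x)
    exact rpow_sub_one hx.ne' r

lemma hasDerivAt_exp_const_mul (c t : ℝ) :
    HasDerivAt (fun t => exp (c * t)) (c * exp (c * t)) t := by
  simpa [mul_comm] using ((hasDerivAt_id t).const_mul c).exp

lemma tendsto_atTop_of_tendsto_deriv_atTop {f f' : ℝ → ℝ} (hf : ∀ t, HasDerivAt f (f' t) t)
    (h : Tendsto f' atTop atTop) : Tendsto f atTop atTop := by
  obtain ⟨T, hT⟩ := eventually_atTop.1 (h.eventually_ge_atTop 1)
  refine tendsto_atTop_mono' _ ?_ (tendsto_atTop_add_const_right atTop (f T - T) tendsto_id)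
  filter_upwards [eventually_ge_atTop T] with t ht
  have hgrowth : 1 * (t - T) ≤ f t - f T :=
    (convex_Ici T).mul_sub_le_image_sub_of_le_deriv
      (fun s _ => (hf s).continuousAt.continuousWithinAt)
      (fun s _ => (hf s).differentiableAt.differentiableWithinAt)
      (fun s hs => (hf s).deriv ▸ hT s (interior_subset hs)) T self_mem_Ici t ht ht
  simp only [id]
  linarith

lemma monotoneOn_exp_mul {u u' : ℝ → ℝ} {k T : ℝ} (hu : ∀ t, HasDerivAt u (u' t) t)
    (h : ∀ t ≥ T, 0 ≤ u' t + k * u t) : MonotoneOn (fun t => exp (k * t) * u t) (Ici T) := by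
  have hderiv (t : ℝ) :
      HasDerivAt (fun t => exp (k * t) * u t) (exp (k * t) * (u' t + k * u t)) t :=
    ((hasDerivAt_exp_const_mul k t).fun_mul (hu t)).congr_deriv (by ring)
  exact monotoneOn_of_hasDerivWithinAt_nonneg (convex_Ici T)
    (fun t _ => (hderiv t).continuousAt.continuousWithinAt)
    (fun t _ => (hderiv t).hasDerivWithinAt)
    (fun t ht => mul_nonneg (exp_pos _).le (h t (interior_subset ht)))

/- For `p = u' + k u` the hypothesis reads `p' ≥ k p`, so `p ≥ c e^{kt}` with `c > 0`, and
integrating once more gives `u ≥ c e^{kt} / (2k) + Q e^{-kt}`. -/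
lemma tendsto_atTop_of_sq_mul_le_of_add_pos {u u' u'' : ℝ → ℝ} {k T : ℝ} (hk : 0 < k)
    (hu : ∀ t, HasDerivAt u (u' t) t) (hu' : ∀ t, HasDerivAt u' (u'' t) t)
    (h : ∀ t ≥ T, k ^ 2 * u t ≤ u'' t) (hpos : 0 < u' T + k * u T) : Tendsto u atTop atTop := by
  have hfactor : MonotoneOn (fun t => exp (-k * t) * (u' t + k * u t)) (Ici T) :=
    monotoneOn_exp_mul (fun t => (hu' t).fun_add ((hu t).const_mul k))
      (fun t ht => by linarith [h t ht])
  set c := exp (-k * T) * (u' T + k * u T)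
  have hc : 0 < c := mul_pos (exp_pos _) hpos
  have hgrowth : ∀ t ≥ T, c * exp (k * t) ≤ u' t + k * u t := fun t ht => by
    have hle : c ≤ exp (-k * t) * (u' t + k * u t) := hfactor self_mem_Ici ht ht
    rwa [neg_mul, exp_neg, ← div_eq_inv_mul, le_div_iff₀ (exp_pos _)] at hle
  have hmono : MonotoneOn (fun t => exp (k * t) * (u t - c / (2 * k) * exp (k * t))) (Ici T) :=
    monotoneOn_exp_mul
      (fun t => (hu t).fun_sub ((hasDerivAt_exp_const_mul k t).const_mul (c / (2 * k))))
      (fun t ht => by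
        have hcancel : c / (2 * k) * (2 * k) = c := div_mul_cancel₀ _ (by positivity)
        linear_combination hgrowth t ht + exp (k * t) * hcancel)
  set Q := exp (k * T) * (u T - c / (2 * k) * exp (k * T))
  have hlower : Tendsto (fun t => Q * exp (-k * t) + c / (2 * k) * exp (k * t)) atTop atTop :=
    ((tendsto_exp_neg_mul_atTop hk).const_mul Q).add_atTop <|
      (tendsto_exp_atTop.comp (tendsto_id.const_mul_atTop hk)).const_mul_atTop
        (div_pos hc (by positivity))
  refine tendsto_atTop_mono' _ ?_ hlower
  filter_upwards [eventually_ge_atTop T] with t ht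
  have hQ : Q ≤ exp (k * t) * (u t - c / (2 * k) * exp (k * t)) := hmono self_mem_Ici ht ht
  rw [neg_mul, exp_neg, ← div_eq_mul_inv]
  linarith [(div_le_iff₀' (exp_pos (k * t))).2 hQ]

/-- `u` is twice differentiable on the whole line, with second derivative `u''`. The first
derivative is quantified away because the differential inequalities only involve `u` and `u''`. -/
def HasSecondDeriv (u u'' : ℝ → ℝ) : Prop :=
  ∃ u' : ℝ → ℝ, (∀ t, HasDerivAt u (u' t) t) ∧ ∀ t, HasDerivAt u' (u'' t) t

namespace HasSecondDeriv

variable {u u'' v v₂ v₄ f : ℝ → ℝ} {a b : ℝ}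

lemma neg (hu : HasSecondDeriv u u'') : HasSecondDeriv (fun t => -u t) fun t => -u'' t :=
  let ⟨u', h, h'⟩ := hu
  ⟨fun t => -u' t, fun t => (h t).fun_neg, fun t => (h' t).fun_neg⟩

lemma const_mul (hu : HasSecondDeriv u u'') (c : ℝ) :
    HasSecondDeriv (fun t => c * u t) fun t => c * u'' t :=
  let ⟨u', h, h'⟩ := hu
  ⟨fun t => c * u' t, fun t => (h t).const_mul c, fun t => (h' t).const_mul c⟩

lemma add (hu : HasSecondDeriv u u'') (hv : HasSecondDeriv v v₂) :
    HasSecondDeriv (fun t => u t + v t) fun t => u'' t + v₂ t :=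
  let ⟨u', h, h'⟩ := hu
  let ⟨v', k, k'⟩ := hv
  ⟨fun t => u' t + v' t, fun t => (h t).fun_add (k t), fun t => (h' t).fun_add (k' t)⟩

lemma sub (hu : HasSecondDeriv u u'') (hv : HasSecondDeriv v v₂) :
    HasSecondDeriv (fun t => u t - v t) fun t => u'' t - v₂ t := by
  simpa only [sub_eq_add_neg] using hu.add hv.neg

lemma exp_const_mul (c : ℝ) :
    HasSecondDeriv (fun t => exp (c * t)) fun t => c * (c * exp (c * t)) :=
  ⟨fun t => c * exp (c * t), hasDerivAt_exp_const_mul c,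
    fun t => (hasDerivAt_exp_const_mul c t).const_mul c⟩

lemma iteratedDeriv_add_two {n : WithTop ℕ∞} {m : ℕ} (hv : ContDiff ℝ n v)
    (hm : ((m + 2 : ℕ) : WithTop ℕ∞) ≤ n) :
    HasSecondDeriv (iteratedDeriv m v) (iteratedDeriv (m + 2) v) := by
  have hderiv (j : ℕ) (hj : j < m + 2) (t : ℝ) :
      HasDerivAt (iteratedDeriv j v) (iteratedDeriv (j + 1) v t) t := by
    rw [iteratedDeriv_succ]
    exact (hv.differentiable_iteratedDeriv j ((Nat.cast_lt.2 hj).trans_le hm) t).hasDerivAt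
  exact ⟨_, hderiv m (by lia), hderiv (m + 1) (by lia)⟩

lemma tendsto_atTop (hu : HasSecondDeriv u u'') (h : Tendsto u'' atTop atTop) :
    Tendsto u atTop atTop :=
  let ⟨_, hu₀, hu₁⟩ := hu
  tendsto_atTop_of_tendsto_deriv_atTop hu₀ (tendsto_atTop_of_tendsto_deriv_atTop hu₁ h)

/- This makes the comparison principle applicable to combinations of `v''` and `v` although no bound
on `v''` is known a priori: blow-up of `v''` would be inherited by `v`. -/
lemma not_tendsto_sub_atTop {c d : ℝ} (hv : HasSecondDeriv v v₂)
    (hlim : Tendsto v atTop (𝓝 c)) (hf : Tendsto f atTop (𝓝 d)) :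
    ¬ Tendsto (fun t => v₂ t - f t) atTop atTop := fun h =>
  not_tendsto_atTop_of_tendsto_nhds hlim <| hv.tendsto_atTop <| by simpa using h.atTop_add hf

lemma not_tendsto_sub_atBot {c d : ℝ} (hv : HasSecondDeriv v v₂)
    (hlim : Tendsto v atTop (𝓝 c)) (hf : Tendsto f atTop (𝓝 d)) :
    ¬ Tendsto (fun t => v₂ t - f t) atTop atBot := fun h =>
  hv.neg.not_tendsto_sub_atTop hlim.neg hf.neg <|
    (tendsto_neg_atBot_atTop.comp h).congr fun t => by simp only [Function.comp_apply]; ring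

lemma antitoneOn_exp_mul {k T : ℝ} (hk : 0 < k) (hu : HasSecondDeriv u u'')
    (hlim : ¬ Tendsto u atTop atTop) (h : ∀ t ≥ T, k ^ 2 * u t ≤ u'' t) :
    AntitoneOn (fun t => exp (k * t) * u t) (Ici T) := by
  obtain ⟨u', hu₀, hu₁⟩ := hu
  have hfactor : ∀ t ≥ T, u' t + k * u t ≤ 0 := fun t ht => by
    by_contra! hpos
    exact hlim <|
      tendsto_atTop_of_sq_mul_le_of_add_pos hk hu₀ hu₁ (fun s hs => h s (ht.trans hs)) hpos
  have hneg : MonotoneOn (fun t => exp (k * t) * -u t) (Ici T) :=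
    monotoneOn_exp_mul (fun t => (hu₀ t).fun_neg) (fun t ht => by linarith [hfactor t ht])
  simpa using hneg.neg

lemma antitone_exp_mul {k : ℝ} (hk : 0 < k) (hu : HasSecondDeriv u u'')
    (hlim : ¬ Tendsto u atTop atTop) (h : ∀ t, k ^ 2 * u t ≤ u'' t) :
    Antitone fun t => exp (k * t) * u t := fun _ _ hst =>
  hu.antitoneOn_exp_mul hk hlim (fun t _ => h t) self_mem_Ici hst hst

lemma antitoneOn_exp_mul_add_exp {k σ E T : ℝ} (hk : 0 < k) (hσ : 0 < σ)
    (hu : HasSecondDeriv u u'') (hlim : ¬ Tendsto u atTop atTop)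
    (h : ∀ t ≥ T, -(E * (σ ^ 2 - k ^ 2)) * exp (-σ * t) ≤ u'' t - k ^ 2 * u t) :
    AntitoneOn (fun t => exp (k * t) * (u t + E * exp (-σ * t))) (Ici T) := by
  refine (hu.add ((exp_const_mul (-σ)).const_mul E)).antitoneOn_exp_mul hk (fun hsum => hlim ?_)
    (fun t ht => by linarith [h t ht])
  simpa using hsum.atTop_add ((tendsto_exp_neg_mul_atTop hσ).const_mul E).neg

lemma nonpos_of_sq_mul_le {k c : ℝ} (hk : 0 < k) (hu : HasSecondDeriv u u'')
    (hlim : ¬ Tendsto u atTop atTop) (hbot : Tendsto u atBot (𝓝 c))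
    (h : ∀ t, k ^ 2 * u t ≤ u'' t) (t : ℝ) : u t ≤ 0 := by
  have hzero : Tendsto (fun s => exp (k * s) * u s) atBot (𝓝 0) := by
    simpa using (tendsto_exp_atBot.comp (tendsto_id.const_mul_atBot hk)).mul hbot
  have hle : exp (k * t) * u t ≤ 0 := (hu.antitone_exp_mul hk hlim h).ge_of_tendsto hzero t
  exact nonpos_of_mul_nonpos_right hle (exp_pos _)

lemma eventually_le_mul_exp {m m' : ℝ} (ha : 0 < a) (hab : a < b) (hm : m < m')
    (hu : HasSecondDeriv u u'') (hlim : ¬ Tendsto u atTop atTop)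
    (h : ∀ᶠ t in atTop, -(m * (b ^ 2 - a ^ 2)) * exp (-a * t) ≤ u'' t - b ^ 2 * u t) :
    ∀ᶠ t in atTop, u t ≤ m' * exp (-a * t) := by
  obtain ⟨T, hT⟩ := eventually_atTop.1 h
  have hanti : AntitoneOn (fun t => exp (b * t) * (u t + -m * exp (-a * t))) (Ici T) :=
    hu.antitoneOn_exp_mul_add_exp (ha.trans hab) ha hlim fun t ht => by linarith [hT t ht]
  set Q := exp (b * T) * (u T + -m * exp (-a * T))
  have hgrowth : Tendsto (fun t => (m' - m) * exp ((b - a) * t)) atTop atTop :=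
    (tendsto_exp_atTop.comp (tendsto_id.const_mul_atTop (sub_pos.2 hab))).const_mul_atTop
      (sub_pos.2 hm)
  filter_upwards [eventually_ge_atTop T, hgrowth.eventually_ge_atTop Q] with t ht hQ
  have hexp : exp ((b - a) * t) = exp (b * t) * exp (-a * t) := by rw [← exp_add]; ring_nf
  have hle : exp (b * t) * (u t + -m * exp (-a * t)) ≤ exp (b * t) * ((m' - m) * exp (-a * t)) :=
    calc _ ≤ Q := hanti self_mem_Ici ht ht
      _ ≤ (m' - m) * exp ((b - a) * t) := hQ
      _ = _ := by rw [hexp]; ring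
  linarith [le_of_mul_le_mul_left hle (exp_pos _)]

lemma isLittleO_exp (ha : 0 < a) (hab : a < b)
    (hu : HasSecondDeriv u u'') (htop : ¬ Tendsto u atTop atTop)
    (hbot : ¬ Tendsto u atTop atBot) (hode : ∀ t, u'' t - b ^ 2 * u t = f t)
    (hf : f =o[atTop] fun t => exp (-a * t)) : u =o[atTop] fun t => exp (-a * t) := by
  have hgap : 0 < b ^ 2 - a ^ 2 := by nlinarith
  refine isLittleO_iff.2 fun ε hε => ?_
  have hsmall := hf.def (c := ε / 2 * (b ^ 2 - a ^ 2)) (by positivity)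
  simp only [norm_eq_abs, abs_exp] at hsmall ⊢
  have hupper := hu.eventually_le_mul_exp ha hab (half_lt_self hε) htop <| hsmall.mono
    fun t ht => by linarith [hode t, neg_abs_le (f t)]
  have hlower := hu.neg.eventually_le_mul_exp ha hab (half_lt_self hε)
    (by rwa [tendsto_neg_atTop_iff]) <| hsmall.mono
    fun t ht => by linarith [hode t, le_abs_self (f t)]
  filter_upwards [hupper, hlower] with t ht ht'
  exact abs_le'.2 ⟨ht, ht'⟩

/- The corrections `± E e^{-σt}` absorb `f`: they squeeze `e^{kt} u` between a monotone and an
antitone function whose difference tends to zero. -/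
lemma exists_tendsto_exp_mul {k σ : ℝ} (hk : 0 < k) (hkσ : k < σ)
    (hu : HasSecondDeriv u u'') (htop : ¬ Tendsto u atTop atTop)
    (hbot : ¬ Tendsto u atTop atBot) (hode : ∀ t, u'' t - k ^ 2 * u t = f t)
    (hf : f =O[atTop] fun t => exp (-σ * t)) :
    ∃ l, Tendsto (fun t => exp (k * t) * u t) atTop (𝓝 l) := by
  obtain ⟨D, hD, hfD⟩ := hf.exists_pos
  obtain ⟨T, hT⟩ := eventually_atTop.1 hfD.bound
  simp only [norm_eq_abs, abs_exp] at hT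
  have hgap : 0 < σ ^ 2 - k ^ 2 := by nlinarith
  set E := D / (σ ^ 2 - k ^ 2)
  have hE : E * (σ ^ 2 - k ^ 2) = D := div_mul_cancel₀ _ hgap.ne'
  have hE₀ : 0 < E := by positivity
  have hanti : AntitoneOn (fun t => exp (k * t) * (u t + E * exp (-σ * t))) (Ici T) :=
    hu.antitoneOn_exp_mul_add_exp hk (hk.trans hkσ) htop fun t ht => by
      rw [hE]; linarith [hT t ht, hode t, neg_abs_le (f t)]
  have hanti' : AntitoneOn (fun t => exp (k * t) * (-u t + E * exp (-σ * t))) (Ici T) :=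
    hu.neg.antitoneOn_exp_mul_add_exp hk (hk.trans hkσ) (by rwa [tendsto_neg_atTop_iff])
      fun t ht => by
        rw [hE]; linarith [hT t ht, hode t, le_abs_self (f t)]
  have hbdd : BddAbove ((fun t => -(exp (k * t) * (-u t + E * exp (-σ * t)))) '' Ici T) := by
    refine ⟨exp (k * T) * (u T + E * exp (-σ * T)), forall_mem_image.2 fun t ht => ?_⟩
    have herror : 0 ≤ exp (k * t) * (E * exp (-σ * t)) :=
      mul_nonneg (exp_pos _).le (mul_nonneg hE₀.le (exp_pos _).le)
    linarith [hanti self_mem_Ici ht ht]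
  obtain ⟨l, hl⟩ := exists_tendsto_atTop_of_monotoneOn_Ici hanti'.neg hbdd
  have herror : Tendsto (fun t => E * exp (-(σ - k) * t)) atTop (𝓝 0) := by
    simpa using (tendsto_exp_neg_mul_atTop (sub_pos.2 hkσ)).const_mul E
  have hsum := hl.add herror
  rw [add_zero] at hsum
  refine ⟨l, hsum.congr fun t => ?_⟩
  have hexp : exp (-(σ - k) * t) = exp (k * t) * exp (-σ * t) := by rw [← exp_add]; ring_nf
  rw [hexp]
  ring

lemma exists_eventually_le_mul_exp {c : ℝ} (ha : 0 < a) (hab : a < b)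
    (hv : HasSecondDeriv v v₂) (hv₂ : HasSecondDeriv v₂ v₄) (hlim : Tendsto v atTop (𝓝 c))
    (h : ∀ᶠ t in atTop, v₄ t - (a ^ 2 + b ^ 2) * v₂ t + a ^ 2 * b ^ 2 * v t ≤ 0) :
    ∃ K, ∀ᶠ t in atTop, v t ≤ K * exp (-a * t) := by
  obtain ⟨T, hT⟩ := eventually_atTop.1 h
  have hfactor : ¬ Tendsto (fun t => b ^ 2 * v t - v₂ t) atTop atTop := by
    simpa only [← tendsto_neg_atTop_iff, neg_sub] using
      hv.not_tendsto_sub_atBot hlim (hlim.const_mul (b ^ 2))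
  have hanti : AntitoneOn (fun t => exp (a * t) * (b ^ 2 * v t - v₂ t)) (Ici T) :=
    ((hv.const_mul (b ^ 2)).sub hv₂).antitoneOn_exp_mul ha hfactor
      fun t ht => by linarith [hT t ht]
  set M := exp (a * T) * (b ^ 2 * v T - v₂ T)
  have hgap : b ^ 2 - a ^ 2 ≠ 0 := by nlinarith
  refine ⟨_, hv.eventually_le_mul_exp (m := M / (b ^ 2 - a ^ 2)) ha hab (lt_add_one _)
    (not_tendsto_atTop_of_tendsto_nhds hlim) ?_⟩
  filter_upwards [eventually_ge_atTop T] with t ht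
  have hM : exp (a * t) * (b ^ 2 * v t - v₂ t) ≤ M := hanti self_mem_Ici ht ht
  rw [div_mul_cancel₀ _ hgap, neg_mul a, exp_neg, ← div_eq_mul_inv, neg_div]
  linarith [(le_div_iff₀' (exp_pos (a * t))).2 hM]

lemma isBigO_exp_of_isLittleO {a' : ℝ} (ha' : 0 < a') (haa' : a' < a) (hab : a < b)
    (hv : HasSecondDeriv v v₂) (hv₂ : HasSecondDeriv v₂ v₄) (hlim : Tendsto v atTop (𝓝[>] 0))
    (hode : ∀ t, v₄ t - (a ^ 2 + b ^ 2) * v₂ t + a ^ 2 * b ^ 2 * v t = f t)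
    (hf : f =o[atTop] v) : v =O[atTop] fun t => exp (-a' * t) := by
  obtain ⟨hlim, hpos⟩ := tendsto_nhdsWithin_iff.1 hlim
  have hgap : 0 < a ^ 2 - a' ^ 2 := by nlinarith
  have hgap' : 0 < b ^ 2 - a' ^ 2 := by nlinarith
  -- This choice of `b'` gives `(D² - a'²)(D² - b'²) v = f - (a² - a'²)(b² - a'²) v`.
  set b' := √(a ^ 2 + b ^ 2 - a' ^ 2)
  have hb' : b' ^ 2 = a ^ 2 + b ^ 2 - a' ^ 2 := sq_sqrt (by nlinarith)
  have hab' : a' < b' := lt_sqrt_of_sq_lt (by nlinarith)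
  obtain ⟨K, hK⟩ := hv.exists_eventually_le_mul_exp ha' hab' hv₂ hlim <| by
    filter_upwards [hf.def (mul_pos hgap hgap'), hpos] with t ht (hvt : 0 < v t)
    rw [norm_eq_abs, norm_eq_abs, abs_of_pos hvt] at ht
    rw [hb']
    linarith [hode t, le_abs_self (f t)]
  refine IsBigO.of_bound K ?_
  filter_upwards [hK, hpos] with t ht (hvt : 0 < v t)
  rwa [norm_of_nonneg hvt.le, norm_of_nonneg (exp_pos _).le]

lemma exists_isBigO_exp {r : ℝ} (ha : 0 < a) (hab : a < b) (hr : 1 < r)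
    (hv : HasSecondDeriv v v₂) (hv₂ : HasSecondDeriv v₂ v₄) (hlim : Tendsto v atTop (𝓝[>] 0))
    (hode : ∀ t, v₄ t - (a ^ 2 + b ^ 2) * v₂ t + a ^ 2 * b ^ 2 * v t = f t)
    (hf : f =O[atTop] fun t => v t ^ r) : ∃ σ > a, f =O[atTop] fun t => exp (-σ * t) := by
  have hr₀ : 0 < r := one_pos.trans hr
  obtain ⟨a', hlower, hupper⟩ := exists_between (div_lt_self ha hr)
  have hdecay : v =O[atTop] fun t => exp (-a' * t) :=
    isBigO_exp_of_isLittleO ((div_pos ha hr₀).trans hlower) hupper hab hv hv₂ hlim hode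
      (hf.trans_isLittleO ((isLittleO_rpow_id_nhdsGT_zero hr).comp_tendsto hlim))
  refine ⟨a' * r, (div_lt_iff₀ hr₀).1 hlower, hf.trans ?_⟩
  refine (hdecay.rpow hr₀.le (Eventually.of_forall fun t => (exp_pos _).le)).congr_right fun t => ?_
  rw [← exp_mul]
  ring_nf

lemma exists_tendsto_exp_mul_sub_sq_mul {r : ℝ} (ha : 0 < a) (hab : a < b) (hr : 1 < r)
    (hv : HasSecondDeriv v v₂) (hv₂ : HasSecondDeriv v₂ v₄) (hlim : Tendsto v atTop (𝓝[>] 0))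
    (hode : ∀ t, v₄ t - (a ^ 2 + b ^ 2) * v₂ t + a ^ 2 * b ^ 2 * v t = f t)
    (hf : f =O[atTop] fun t => v t ^ r) :
    ∃ W, Tendsto (fun t => exp (a * t) * (v₂ t - b ^ 2 * v t)) atTop (𝓝 W) := by
  obtain ⟨σ, hσ, hfσ⟩ := exists_isBigO_exp ha hab hr hv hv₂ hlim hode hf
  have hlim₀ := hlim.mono_right nhdsWithin_le_nhds
  exact (hv₂.sub (hv.const_mul (b ^ 2))).exists_tendsto_exp_mul ha hσ
    (hv.not_tendsto_sub_atTop hlim₀ (hlim₀.const_mul (b ^ 2)))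
    (hv.not_tendsto_sub_atBot hlim₀ (hlim₀.const_mul (b ^ 2)))
    (fun t => by linarith [hode t]) hfσ

lemma tendsto_exp_mul_of_tendsto_exp_mul_sub_sq_mul {c W : ℝ} (ha : 0 < a) (hab : a < b)
    (hv : HasSecondDeriv v v₂) (hlim : Tendsto v atTop (𝓝 c))
    (hW : Tendsto (fun t => exp (a * t) * (v₂ t - b ^ 2 * v t)) atTop (𝓝 W)) :
    Tendsto (fun t => exp (a * t) * v t) atTop (𝓝 (-W / (b ^ 2 - a ^ 2))) := by
  have hgap : b ^ 2 - a ^ 2 ≠ 0 := by nlinarith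
  set l := -W / (b ^ 2 - a ^ 2)
  have hl : l * (b ^ 2 - a ^ 2) = -W := div_mul_cancel₀ _ hgap
  have hexp (t : ℝ) : exp (-a * t) * exp (a * t) = 1 := by rw [← exp_add]; simp
  have hzlim : Tendsto (fun t => v t - l * exp (-a * t)) atTop (𝓝 c) := by
    simpa using hlim.sub ((tendsto_exp_neg_mul_atTop ha).const_mul l)
  have hremainder : (fun t => exp (-a * t) * (exp (a * t) * (v₂ t - b ^ 2 * v t) - W))
      =o[atTop] fun t => exp (-a * t) := by
    have hone : (fun t => exp (a * t) * (v₂ t - b ^ 2 * v t) - W) =o[atTop] fun _ => (1 : ℝ) :=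
      (isLittleO_one_iff ℝ).2 (tendsto_sub_nhds_zero_iff.2 hW)
    simpa using (isBigO_refl (fun t => exp (-a * t)) atTop).mul_isLittleO hone
  have hz : (fun t => v t - l * exp (-a * t)) =o[atTop] fun t => exp (-a * t) :=
    (hv.sub ((exp_const_mul (-a)).const_mul l)).isLittleO_exp ha hab
      (not_tendsto_atTop_of_tendsto_nhds hzlim) (not_tendsto_atBot_of_tendsto_nhds hzlim)
      (fun t => by
        linear_combination exp (-a * t) * hl - (v₂ t - b ^ 2 * v t) * hexp t) hremainder
  refine tendsto_sub_nhds_zero_iff.1 (hz.tendsto_div_nhds_zero.congr fun t => ?_)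
  rw [div_eq_iff (exp_pos _).ne']
  linear_combination -v t * hexp t

lemma neg_of_tendsto_exp_mul_sub_sq_mul {c d W t₀ : ℝ} (ha : 0 < a) (hb : 0 < b)
    (hv : HasSecondDeriv v v₂) (hv₂ : HasSecondDeriv v₂ v₄)
    (htop : Tendsto v atTop (𝓝 c)) (hbot : Tendsto v atBot (𝓝 d)) (hpos : 0 < v t₀)
    (h : ∀ t, 0 ≤ v₄ t - (a ^ 2 + b ^ 2) * v₂ t + a ^ 2 * b ^ 2 * v t)
    (hW : Tendsto (fun t => exp (a * t) * (v₂ t - b ^ 2 * v t)) atTop (𝓝 W)) : W < 0 := by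
  have hanti : Antitone fun t => exp (a * t) * (v₂ t - b ^ 2 * v t) :=
    (hv₂.sub (hv.const_mul (b ^ 2))).antitone_exp_mul ha
      (hv.not_tendsto_sub_atTop htop (htop.const_mul (b ^ 2))) (fun t => by linarith [h t])
  by_contra! hW₀
  have hfactor (t : ℝ) : b ^ 2 * v t ≤ v₂ t :=
    sub_nonneg.1 <| nonneg_of_mul_nonneg_right (hW₀.trans (hanti.le_of_tendsto hW t)) (exp_pos _)
  exact hpos.not_ge <|
    hv.nonpos_of_sq_mul_le hb (not_tendsto_atTop_of_tendsto_nhds htop) hbot hfactor t₀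

end HasSecondDeriv

namespace IsSol

variable {A B β : ℝ} {g v : ℝ → ℝ}

lemma comp_neg (hsol : IsSol A B g v) : IsSol A B g fun t => v (-t) := fun t => by
  simpa [iteratedDeriv_comp_neg, Even.neg_one_pow (by decide : Even 4)] using hsol (-t)

lemma exists_tendsto_exp_mul {a b r : ℝ} (ha : 0 < a) (hab : a < b) (hA : a ^ 2 + b ^ 2 = A)
    (hB : a ^ 2 * b ^ 2 = B - β) (hr : 1 < r)
    (hg : (fun t => g t - β * t) =O[𝓝[>] 0] fun t => t ^ r)
    (hsol : IsSol A B g v) (hv4 : ContDiff ℝ 4 v) (hpos : ∀ t, 0 < v t)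
    (htop : Tendsto v atTop (𝓝 0)) (hbot : Tendsto v atBot (𝓝 0)) :
    ∃ l, Tendsto (fun t => exp (a * t) * v t) atTop (𝓝 l) ∧
      ((∀ t > 0, β * t ≤ g t) → 0 < l) := by
  have hv : HasSecondDeriv v (iteratedDeriv 2 v) := by
    simpa using HasSecondDeriv.iteratedDeriv_add_two (m := 0) hv4 (by norm_num)
  have hv₂ : HasSecondDeriv (iteratedDeriv 2 v) (iteratedDeriv 4 v) :=
    HasSecondDeriv.iteratedDeriv_add_two hv4 le_rfl
  have hode (t : ℝ) : iteratedDeriv 4 v t - (a ^ 2 + b ^ 2) * iteratedDeriv 2 v t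
      + a ^ 2 * b ^ 2 * v t = g (v t) - β * v t := by
    rw [hA, hB]; linarith [hsol t]
  have hlim : Tendsto v atTop (𝓝[>] 0) :=
    tendsto_nhdsWithin_iff.2 ⟨htop, Eventually.of_forall hpos⟩
  obtain ⟨W, hW⟩ :=
    hv.exists_tendsto_exp_mul_sub_sq_mul ha hab hr hv₂ hlim hode (hg.comp_tendsto hlim)
  refine ⟨_, hv.tendsto_exp_mul_of_tendsto_exp_mul_sub_sq_mul ha hab htop hW, fun hge => ?_⟩
  have hWneg : W < 0 := hv.neg_of_tendsto_exp_mul_sub_sq_mul ha (ha.trans hab) hv₂ htop hbot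
    (hpos 0) (fun t => by linarith [hode t, hge (v t) (hpos t)]) hW
  exact div_pos (neg_pos.2 hWneg) (by nlinarith)

end IsSol

lemma exists_sq_add_sq_eq_and_sq_mul_sq_eq {A P μ : ℝ} (hA : 0 < A) (hP : 0 < P)
    (hdisc : 4 * P < A ^ 2) (hμ : μ = (A - √(A ^ 2 - 4 * P)) / 2) :
    0 < √μ ∧ ∃ b, √μ < b ∧ √μ ^ 2 + b ^ 2 = A ∧ √μ ^ 2 * b ^ 2 = P := by
  set s := √(A ^ 2 - 4 * P)
  have hs : 0 < s := sqrt_pos.2 (by linarith)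
  have hs_sq : s ^ 2 = A ^ 2 - 4 * P := sq_sqrt (by linarith)
  have hsA : s < A := by nlinarith
  have hμ₀ : 0 < μ := by linarith
  have hν₀ : 0 ≤ (A + s) / 2 := by linarith
  refine ⟨sqrt_pos.2 hμ₀, √((A + s) / 2), sqrt_lt_sqrt hμ₀.le (by linarith), ?_, ?_⟩ <;>
    rw [sq_sqrt hμ₀.le, sq_sqrt hν₀, hμ]
  · ring
  · linear_combination -hs_sq / 4

lemma CondG.mem_Ico_of_tendsto_deriv {n : ℕ} {g : ℝ → ℝ} {β : ℝ} (hg : CondG n g)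
    (hβ : Tendsto (deriv g) (𝓝[>] 0) (𝓝 β)) :
    β ∈ Ico 0 ((n : ℝ) ^ 2 * ((n : ℝ) - 4) ^ 2 / 16) := by
  obtain ⟨-, -, -, -, ⟨β', h₀, hlt, hβ'⟩, -⟩ := hg
  exact tendsto_nhds_unique hβ' hβ ▸ ⟨h₀, hlt⟩

theorem stmt_7_general {g v : ℝ → ℝ} {A B β μ : ℝ} (hA : 0 < A) (hB : β < B)
    (hdisc : 4 * (B - β) < A ^ 2) (hμ : μ = (A - √(A ^ 2 - 4 * (B - β))) / 2)
    (hv4 : ContDiff ℝ 4 v) (hvpos : ∀ t, 0 < v t) (hvsol : IsSol A B g v)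
    (hlimT : Tendsto v atTop (𝓝 0)) (hlimB : Tendsto v atBot (𝓝 0))
    (hnear : ∃ r C : ℝ, 1 < r ∧ ∀ t : ℝ, 0 < t → t ≤ 1 → |g t - β * t| ≤ C * t ^ r) :
    (∃ l : ℝ, Tendsto (fun t => exp (√μ * t) * v t) atTop (𝓝 l) ∧
      ((∀ t > 0, β * t ≤ g t) → 0 < l)) ∧
    (∃ l : ℝ, Tendsto (fun t => exp (-(√μ * t)) * v t) atBot (𝓝 l) ∧
      ((∀ t > 0, β * t ≤ g t) → 0 < l)) := by
  obtain ⟨ha, b, hab, hsum, hprod⟩ :=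
    exists_sq_add_sq_eq_and_sq_mul_sq_eq hA (sub_pos.2 hB) hdisc hμ
  obtain ⟨r, C, hr, hC⟩ := hnear
  have hg : (fun t => g t - β * t) =O[𝓝[>] 0] fun t => t ^ r := by
    refine IsBigO.of_bound C ?_
    filter_upwards [Ioc_mem_nhdsGT one_pos] with t ⟨ht₀, ht₁⟩
    simpa only [norm_eq_abs, abs_of_pos (rpow_pos_of_pos ht₀ r)] using hC t ht₀ ht₁
  refine ⟨hvsol.exists_tendsto_exp_mul ha hab hsum hprod hr hg hv4 hvpos hlimT hlimB, ?_⟩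
  obtain ⟨l, hl, hlpos⟩ := hvsol.comp_neg.exists_tendsto_exp_mul ha hab hsum hprod hr hg
    (hv4.comp contDiff_neg) (fun t => hvpos (-t)) (hlimB.comp tendsto_neg_atTop_atBot)
    (hlimT.comp tendsto_neg_atBot_atTop)
  refine ⟨l, (hl.comp tendsto_neg_atBot_atTop).congr fun t => ?_, hlpos⟩
  simp only [Function.comp_apply, mul_neg, neg_neg]

theorem stmt_7 (n : ℕ) (hn : 5 ≤ n) (g : ℝ → ℝ) (hg : CondG n g)
    (A B : ℝ) (hA : A = ((n : ℝ) * ((n : ℝ) - 4) + 8) / 2)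
    (hB : B = (n : ℝ) ^ 2 * ((n : ℝ) - 4) ^ 2 / 16)
    (β : ℝ) (hβ : Filter.Tendsto (deriv g) (nhdsWithin 0 (Set.Ioi 0)) (nhds β))
    (μ : ℝ) (hμ : μ = (A - Real.sqrt (A ^ 2 - 4 * (B - β))) / 2)
    (v : ℝ → ℝ) (hv4 : ContDiff ℝ 4 v) (hvpos : ∀ t, 0 < v t) (hvsol : IsSol A B g v)
    (hlimT : Filter.Tendsto v Filter.atTop (nhds 0))
    (hlimB : Filter.Tendsto v Filter.atBot (nhds 0))
    (hnear : ∃ r C : ℝ, 1 < r ∧ ∀ t : ℝ, 0 < t → t ≤ 1 → |g t - β * t| ≤ C * t ^ r) :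
    (∃ l : ℝ, Filter.Tendsto (fun t => Real.exp (Real.sqrt μ * t) * v t) Filter.atTop (nhds l) ∧
      ((∀ t > 0, β * t ≤ g t) → 0 < l)) ∧
    (∃ l : ℝ, Filter.Tendsto (fun t => Real.exp (-(Real.sqrt μ * t)) * v t) Filter.atBot (nhds l) ∧
      ((∀ t > 0, β * t ≤ g t) → 0 < l)) := by
  obtain ⟨hβ₀, hβB⟩ := hg.mem_Ico_of_tendsto_deriv hβ
  have hn' : (5 : ℝ) ≤ n := by exact_mod_cast hn
  have hA₀ : 0 < A := by rw [hA]; nlinarith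
  have hdiscrim : A ^ 2 - 4 * B = 4 * ((n : ℝ) - 2) ^ 2 := by rw [hA, hB]; ring
  have hdisc : 4 * (B - β) < A ^ 2 := by nlinarith
  exact stmt_7_general hA₀ (hB ▸ hβB) hdisc hμ hv4 hvpos hvsol hlimT hlimB hnear
end
end

section
/- Let v : ℝ → ℝ be a C⁴ nonnegative solution of the ODE v''''(t) − A·v''(t) + B·v(t) = g(v(t)) and suppose v'(t₀) = 0 for some t₀ ∈ ℝ. Then v is symmetric with respect to t₀, that is, v(t₀ + t) = v(t₀ − t) for all t ∈ ℝ. -/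
/-!
With `a = n / 2` and `b = (n - 4) / 2` the linear operator factors as `(D² - a²)(D² - b²)`. Let `w`
be the difference of `v` and its reflection about `t₀`, in either order, so that `w`, `D w` and
`D² w` vanish at `t₀`. Since `g` is superadditive, `(D² - a²)(D² - b²) w ≥ g(w)` wherever `w ≥ 0`.
If `D³ w` were positive at `t₀`, the comparison principle for the two factors would keep `w` and its
first four derivatives nonnegative after `t₀`, with `D⁴ w ≥ g(w)`, and the superlinear growth of `g`
would make `w` blow up in finite time. So `D³ w` vanishes at `t₀`, and `v` and its reflection are
solutions with the same Cauchy data at `t₀`.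
-/

open Real Filter Set

noncomputable section

open scoped Nat Topology

section IteratedDerivatives

lemma hasDerivAt_iteratedDeriv {E : Type*} [NormedAddCommGroup E] [NormedSpace ℝ E] {f : ℝ → E}
    {n k : ℕ} (hf : ContDiff ℝ n f) (hk : k < n) (t : ℝ) :
    HasDerivAt (iteratedDeriv k f) (iteratedDeriv (k + 1) f t) t := by
  rw [iteratedDeriv_succ]
  exact (hf.differentiable_iteratedDeriv k (mod_cast hk) t).hasDerivAt

lemma add_mul_pow_div_factorial_le {f : ℝ → ℝ} {n : ℕ} {s t m : ℝ}
    (hf : ContDiff ℝ (n + 1) f) (hst : s ≤ t)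
    (hnonneg : ∀ k < n, 0 ≤ iteratedDeriv (k + 1) f s)
    (hm : ∀ x ∈ Ioo s t, m ≤ iteratedDeriv (n + 1) f x) :
    f s + m * (t - s) ^ (n + 1) / (n + 1)! ≤ f t := by
  rcases hst.eq_or_lt with rfl | hst
  · simp
  obtain ⟨x, hx, htaylor⟩ :=
    taylor_mean_remainder_lagrange_iteratedDeriv hst.ne (hf.contDiffOn (s := uIcc s t))
  rw [uIoo_of_lt hst] at hx
  have hts : 0 ≤ t - s := sub_nonneg.2 hst.le
  have hpoly : f s ≤ taylorWithinEval f n (uIcc s t) s t := by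
    rw [taylor_within_apply, Finset.sum_range_succ']
    simp only [Nat.factorial_zero, Nat.cast_one, inv_one, pow_zero, one_mul,
      iteratedDerivWithin_zero, one_smul, le_add_iff_nonneg_left]
    refine Finset.sum_nonneg fun k hk ↦ ?_
    have hk : k < n := Finset.mem_range.1 hk
    rw [iteratedDerivWithin_eq_iteratedDeriv (uniqueDiffOn_uIcc hst.ne)
      (hf.contDiffAt.of_le (by exact_mod_cast (by omega : k + 1 ≤ n + 1))) left_mem_uIcc]
    exact smul_nonneg (mul_nonneg (by positivity) (pow_nonneg hts _)) (hnonneg k hk)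
  have hrem : m * (t - s) ^ (n + 1) / (n + 1)! ≤
      iteratedDeriv (n + 1) f x * (t - s) ^ (n + 1) / (n + 1)! := by
    gcongr
    exact hm x hx
  linarith

end IteratedDerivatives

section Comparison

lemma pos_of_forall_Ico_pos_imp_pos {f : ℝ → ℝ} {a : ℝ} (hf : ContinuousOn f (Ici a))
    (h : ∀ t ≥ a, (∀ x ∈ Ico a t, 0 < f x) → 0 < f t) : ∀ t ≥ a, 0 < f t := by
  by_contra! ⟨t, hat, hft⟩
  have hclosed : IsCompact (Icc a t ∩ f ⁻¹' Iic 0) :=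
    isCompact_Icc.of_isClosed_subset
      ((hf.mono Icc_subset_Ici_self).preimage_isClosed_of_isClosed isClosed_Icc isClosed_Iic)
      inter_subset_left
  obtain ⟨x, ⟨hx, hfx⟩, hleast⟩ := hclosed.exists_isLeast ⟨t, ⟨hat, le_rfl⟩, hft⟩
  refine (h x hx.1 fun y hy ↦ ?_).not_ge hfx
  by_contra! hfy
  exact (hleast ⟨⟨hy.1, hy.2.le.trans hx.2⟩, hfy⟩).not_gt hy.2

variable {a b k : ℝ} {f f' f'' : ℝ → ℝ}

lemma monotoneOn_Icc_of_hasDerivAt_nonneg (hf : ∀ x ∈ Icc a b, HasDerivAt f (f' x) x)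
    (h : ∀ x ∈ Icc a b, 0 ≤ f' x) : MonotoneOn f (Icc a b) :=
  monotoneOn_of_hasDerivWithinAt_nonneg (convex_Icc a b)
    (fun x hx ↦ (hf x hx).continuousAt.continuousWithinAt)
    (fun x hx ↦ (hf x (interior_subset hx)).hasDerivWithinAt)
    fun x hx ↦ h x (interior_subset hx)

lemma nonneg_of_mul_le_deriv (hf : ∀ x ∈ Icc a b, HasDerivAt f (f' x) x) (ha : 0 ≤ f a)
    (h : ∀ x ∈ Icc a b, k * f x ≤ f' x) : ∀ x ∈ Icc a b, 0 ≤ f x := by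
  have hderiv : ∀ x ∈ Icc a b, HasDerivAt (fun x ↦ f x * exp (-k * x))
      ((f' x - k * f x) * exp (-k * x)) x := fun x hx ↦ by
    exact ((hf x hx).mul ((hasDerivAt_id' x).const_mul (-k)).exp).congr_deriv (by ring)
  have hmono : MonotoneOn (fun x ↦ f x * exp (-k * x)) (Icc a b) :=
    monotoneOn_Icc_of_hasDerivAt_nonneg hderiv
      fun x hx ↦ mul_nonneg (sub_nonneg.2 (h x hx)) (exp_pos _).le
  intro x hx
  have hax : f a * exp (-k * a) ≤ f x * exp (-k * x) :=
    hmono (left_mem_Icc.2 (hx.1.trans hx.2)) hx hx.1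
  exact nonneg_of_mul_nonneg_left ((mul_nonneg ha (exp_pos _).le).trans hax) (exp_pos _)

-- `f'' ≥ k² f` splits into the first order inequalities `y' ≥ |k| y` and `f' ≥ -|k| f`, where
-- `y = f' + |k| f`.
lemma nonneg_of_sq_mul_le_deriv_deriv (hf : ∀ x ∈ Icc a b, HasDerivAt f (f' x) x)
    (hf' : ∀ x ∈ Icc a b, HasDerivAt f' (f'' x) x) (ha : 0 ≤ f a) (ha' : 0 ≤ f' a)
    (h : ∀ x ∈ Icc a b, k ^ 2 * f x ≤ f'' x) : ∀ x ∈ Icc a b, 0 ≤ f x := by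
  have hsum : ∀ x ∈ Icc a b, 0 ≤ f' x + |k| * f x :=
    nonneg_of_mul_le_deriv (k := |k|) (fun x hx ↦ (hf' x hx).add ((hf x hx).const_mul |k|))
      (by positivity) fun x hx ↦ by
        have hsq : |k| * (|k| * f x) = k ^ 2 * f x := by rw [← mul_assoc, abs_mul_abs_self, sq]
        have := h x hx
        simp only [mul_add, hsq]
        linarith
  exact nonneg_of_mul_le_deriv (k := -|k|) hf ha fun x hx ↦ by linarith [hsum x hx]

end Comparison

section FactoredOperator

variable {a b t₀ : ℝ} {w : ℝ → ℝ}

-- With `u = w'' - a² w` the operator is `u'' - b² u`, so the second order comparison applies first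
-- to `u` and then to `w`.
lemma factored_comparison {T : ℝ} (hw : ContDiff ℝ 4 w) (h₀ : 0 ≤ w t₀)
    (h₁ : 0 ≤ iteratedDeriv 1 w t₀) (h₂ : a ^ 2 * w t₀ ≤ iteratedDeriv 2 w t₀)
    (h₃ : a ^ 2 * iteratedDeriv 1 w t₀ ≤ iteratedDeriv 3 w t₀)
    (h : ∀ t ∈ Icc t₀ T, 0 ≤ iteratedDeriv 4 w t - (a ^ 2 + b ^ 2) * iteratedDeriv 2 w t
      + a ^ 2 * b ^ 2 * w t) :
    ∀ t ∈ Icc t₀ T, 0 ≤ w t ∧ iteratedDeriv 1 w t₀ ≤ iteratedDeriv 1 w t ∧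
      a ^ 2 * w t ≤ iteratedDeriv 2 w t ∧ iteratedDeriv 3 w t₀ ≤ iteratedDeriv 3 w t := by
  have hw₀ (t) : HasDerivAt w (iteratedDeriv 1 w t) t := by
    simpa using hasDerivAt_iteratedDeriv hw (k := 0) (by norm_num) t
  have hw₁ (t) := hasDerivAt_iteratedDeriv hw (k := 1) (by norm_num) t
  have hu (t) : HasDerivAt (fun t ↦ iteratedDeriv 2 w t - a ^ 2 * w t)
      (iteratedDeriv 3 w t - a ^ 2 * iteratedDeriv 1 w t) t :=
    (hasDerivAt_iteratedDeriv hw (by norm_num) t).sub ((hw₀ t).const_mul _)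
  have hu' (t) : HasDerivAt (fun t ↦ iteratedDeriv 3 w t - a ^ 2 * iteratedDeriv 1 w t)
      (iteratedDeriv 4 w t - a ^ 2 * iteratedDeriv 2 w t) t :=
    (hasDerivAt_iteratedDeriv hw (by norm_num) t).sub ((hw₁ t).const_mul _)
  have hu'' : ∀ t ∈ Icc t₀ T, b ^ 2 * (iteratedDeriv 2 w t - a ^ 2 * w t) ≤
      iteratedDeriv 4 w t - a ^ 2 * iteratedDeriv 2 w t := fun t ht ↦ by linarith [h t ht]
  have hu_nonneg : ∀ t ∈ Icc t₀ T, 0 ≤ iteratedDeriv 2 w t - a ^ 2 * w t :=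
    nonneg_of_sq_mul_le_deriv_deriv (fun t _ ↦ hu t) (fun t _ ↦ hu' t) (sub_nonneg.2 h₂)
      (sub_nonneg.2 h₃) hu''
  have hw_nonneg : ∀ t ∈ Icc t₀ T, 0 ≤ w t :=
    nonneg_of_sq_mul_le_deriv_deriv (fun t _ ↦ hw₀ t) (fun t _ ↦ hw₁ t) h₀ h₁
      fun t ht ↦ sub_nonneg.1 (hu_nonneg t ht)
  have hw'_mono : MonotoneOn (iteratedDeriv 1 w) (Icc t₀ T) :=
    monotoneOn_Icc_of_hasDerivAt_nonneg (fun t _ ↦ hw₁ t) fun t ht ↦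
      (mul_nonneg (sq_nonneg a) (hw_nonneg t ht)).trans (sub_nonneg.1 (hu_nonneg t ht))
  have hu'_mono : MonotoneOn (fun t ↦ iteratedDeriv 3 w t - a ^ 2 * iteratedDeriv 1 w t)
      (Icc t₀ T) :=
    monotoneOn_Icc_of_hasDerivAt_nonneg (fun t _ ↦ hu' t) fun t ht ↦
      (mul_nonneg (sq_nonneg b) (hu_nonneg t ht)).trans (hu'' t ht)
  intro t ht
  have ht₀ : t₀ ∈ Icc t₀ T := left_mem_Icc.2 (ht.1.trans ht.2)
  have hw't := hw'_mono ht₀ ht ht.1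
  have hu't := hu'_mono ht₀ ht ht.1
  refine ⟨hw_nonneg t ht, hw't, sub_nonneg.1 (hu_nonneg t ht), ?_⟩
  linarith [mul_le_mul_of_nonneg_left hw't (sq_nonneg a)]

lemma nonneg_of_nonneg_imp_factored_nonneg (hw : ContDiff ℝ 4 w) (h₀ : w t₀ = 0)
    (h₁ : iteratedDeriv 1 w t₀ = 0) (h₂ : iteratedDeriv 2 w t₀ = 0) (h₃ : 0 < iteratedDeriv 3 w t₀)
    (h : ∀ t ≥ t₀, 0 ≤ w t → 0 ≤ iteratedDeriv 4 w t - (a ^ 2 + b ^ 2) * iteratedDeriv 2 w t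
      + a ^ 2 * b ^ 2 * w t) :
    ∀ t ≥ t₀, 0 ≤ w t := by
  have hw3 : ContDiff ℝ (2 + 1) w := hw.of_le (by norm_num)
  have nonneg_of_pos : ∀ T, (∀ x ∈ Ico t₀ T, 0 < iteratedDeriv 3 w x) →
      ∀ t ∈ Icc t₀ T, 0 ≤ w t := fun T hT t ht ↦ by
    have htaylor := add_mul_pow_div_factorial_le hw3 (m := 0) ht.1
      (by intro k hk; interval_cases k <;> simp [h₁, h₂])
      fun x hx ↦ (hT x ⟨hx.1.le, hx.2.trans_le ht.2⟩).le
    simpa [h₀] using htaylor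
  have hpos : ∀ t ≥ t₀, 0 < iteratedDeriv 3 w t :=
    pos_of_forall_Ico_pos_imp_pos (hw.continuous_iteratedDeriv 3 (by norm_num)).continuousOn
      fun T hT hIco ↦ h₃.trans_le
        (factored_comparison hw h₀.ge h₁.ge (by simp [h₀, h₂]) (by simpa [h₁] using h₃.le)
          (fun t ht ↦ h t ht.1 (nonneg_of_pos T hIco t ht)) T ⟨hT, le_rfl⟩).2.2.2
  exact fun t ht ↦ nonneg_of_pos t (fun x hx ↦ hpos x hx.1) t ⟨ht, le_rfl⟩

end FactoredOperator

section BlowUp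

lemma false_of_monotoneOn_of_geometric_doubling {f : ℝ → ℝ} {T y C r : ℝ}
    (hf : MonotoneOn f (Ici T)) (hy : 0 < y) (hC : 0 ≤ C) (hr₀ : 0 ≤ r) (hr₁ : r < 1)
    (hT : y ≤ f T) (h : ∀ k : ℕ, ∀ t ≥ T, 2 ^ k * y ≤ f t → 2 ^ (k + 1) * y ≤ f (t + C * r ^ k)) :
    False := by
  have hsum_nonneg (k : ℕ) : 0 ≤ C * ∑ i ∈ Finset.range k, r ^ i := by positivity
  have hgrow (k : ℕ) : 2 ^ k * y ≤ f (T + C * ∑ i ∈ Finset.range k, r ^ i) := by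
    induction k with
    | zero => simpa using hT
    | succ k ih =>
      rw [Finset.sum_range_succ, mul_add, ← add_assoc]
      exact h k _ (le_add_of_nonneg_right (hsum_nonneg k)) ih
  have hsum_le (k : ℕ) : C * ∑ i ∈ Finset.range k, r ^ i ≤ C * (1 - r)⁻¹ := by
    rw [← tsum_geometric_of_lt_one hr₀ hr₁]
    gcongr
    exact (summable_geometric_of_lt_one hr₀ hr₁).sum_le_tsum _ fun i _ ↦ by positivity
  obtain ⟨k, hk⟩ := pow_unbounded_of_one_lt (f (T + C * (1 - r)⁻¹) / y) one_lt_two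
  have hle : f (T + C * ∑ i ∈ Finset.range k, r ^ i) ≤ f (T + C * (1 - r)⁻¹) :=
    hf (le_add_of_nonneg_right (hsum_nonneg k))
      (le_add_of_nonneg_right ((hsum_nonneg k).trans (hsum_le k))) (by linarith [hsum_le k])
  exact ((hgrow k).trans hle).not_gt ((div_lt_iff₀ hy).1 hk)

variable {n : ℕ} {f : ℝ → ℝ} {T q c : ℝ}

lemma two_mul_le_of_rpow_le_iteratedDeriv {t h y : ℝ} (hf : ContDiff ℝ (n + 1) f)
    (hq : 1 < q) (hc : 0 < c) (hmono : MonotoneOn f (Ici t))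
    (hnonneg : ∀ k < n, 0 ≤ iteratedDeriv (k + 1) f t)
    (hsup : ∀ s ≥ t, c * f s ^ q ≤ iteratedDeriv (n + 1) f s)
    (hy : 0 < y) (hyt : y ≤ f t) (hh : 0 ≤ h) (hstep : (n + 1)! ≤ c * y ^ (q - 1) * h ^ (n + 1)) :
    2 * y ≤ f (t + h) := by
  have htaylor := add_mul_pow_div_factorial_le hf (le_add_of_nonneg_right hh) hnonneg
    (m := c * y ^ q) fun x hx ↦ by
      refine le_trans ?_ (hsup x hx.1.le)
      gcongr
      exact hyt.trans (hmono self_mem_Ici hx.1.le hx.1.le)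
  have hgain : y ≤ c * y ^ q * h ^ (n + 1) / (n + 1)! := by
    rw [le_div_iff₀ (by positivity)]
    calc y * (n + 1)! ≤ y * (c * y ^ (q - 1) * h ^ (n + 1)) := by gcongr
      _ = c * y ^ q * h ^ (n + 1) := by
        rw [rpow_sub_one hy.ne']
        field_simp
  rw [add_sub_cancel_left] at htaylor
  linarith

-- The time needed to double `f` from the level `2 ^ k * f T` is `C * r ^ k`, with `r < 1` because
-- `q > 1`; these times add up to a finite blow-up time.
lemma false_of_rpow_le_iteratedDeriv (hf : ContDiff ℝ (n + 1) f) (hq : 1 < q) (hc : 0 < c)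
    (hT : 0 < f T) (hnonneg : ∀ k ≤ n, ∀ t ≥ T, 0 ≤ iteratedDeriv (k + 1) f t)
    (hsup : ∀ t ≥ T, c * f t ^ q ≤ iteratedDeriv (n + 1) f t) : False := by
  set C : ℝ := ((n + 1)! / (c * f T ^ (q - 1))) ^ ((n + 1 : ℕ) : ℝ)⁻¹
  set r : ℝ := ((2 : ℝ) ^ (1 - q)) ^ ((n + 1 : ℕ) : ℝ)⁻¹
  have hC : C ^ (n + 1) = (n + 1)! / (c * f T ^ (q - 1)) :=
    rpow_inv_natCast_pow (by positivity) n.succ_ne_zero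
  have hr : r ^ (n + 1) = 2 ^ (1 - q) := rpow_inv_natCast_pow (by positivity) n.succ_ne_zero
  have hr₁ : r < 1 := rpow_lt_one (by positivity)
    (rpow_lt_one_of_one_lt_of_neg one_lt_two (by linarith)) (by positivity)
  have hmono : MonotoneOn f (Ici T) :=
    monotoneOn_of_deriv_nonneg (convex_Ici T) hf.continuous.continuousOn
      (hf.differentiable (by simp)).differentiableOn fun t ht ↦ by
        simpa using hnonneg 0 n.zero_le t (interior_subset ht)
  have hstep (k : ℕ) :
      ((n + 1)! : ℝ) = c * (2 ^ k * f T) ^ (q - 1) * (C * r ^ k) ^ (n + 1) := by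
    have h2 : (2 : ℝ) ^ (q - 1) * 2 ^ (1 - q) = 1 := by
      rw [← rpow_add two_pos, sub_add_sub_cancel, sub_self, rpow_zero]
    calc ((n + 1)! : ℝ) = c * f T ^ (q - 1) * C ^ (n + 1) * (2 ^ (q - 1) * 2 ^ (1 - q)) ^ k := by
          rw [h2, hC]
          field_simp
          simp
      _ = c * (2 ^ k * f T) ^ (q - 1) * (C * r ^ k) ^ (n + 1) := by
          rw [mul_rpow (by positivity) hT.le, ← rpow_pow_comm two_pos.le, ← hr]
          ring
  refine false_of_monotoneOn_of_geometric_doubling hmono hT (C := C) (by positivity)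
    (by positivity) hr₁ le_rfl fun k t ht hkt ↦ ?_
  rw [pow_succ', mul_assoc]
  exact two_mul_le_of_rpow_le_iteratedDeriv hf hq hc (hmono.mono (Ici_subset_Ici.2 ht))
    (fun j hj ↦ hnonneg j hj.le t ht) (fun s hs ↦ hsup s (ht.le.trans hs)) (by positivity) hkt
    (by positivity) (hstep k).le

end BlowUp

section SuperlinearForcing

variable {a b q c t₀ : ℝ} {g w : ℝ → ℝ}

lemma tendsto_atTop_of_pos_le_iteratedDeriv {f : ℝ → ℝ} {n : ℕ} {m : ℝ}
    (hf : ContDiff ℝ (n + 1) f) (hm₀ : 0 < m)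
    (hnonneg : ∀ k < n, 0 ≤ iteratedDeriv (k + 1) f t₀)
    (hm : ∀ x ≥ t₀, m ≤ iteratedDeriv (n + 1) f x) : Tendsto f atTop atTop := by
  have hpoly : Tendsto (fun t ↦ f t₀ + m / (n + 1)! * (t - t₀) ^ (n + 1)) atTop atTop :=
    tendsto_atTop_add_const_left _ _ <| Tendsto.const_mul_atTop (by positivity) <|
      (tendsto_pow_atTop n.succ_ne_zero).comp (tendsto_atTop_add_const_right _ _ tendsto_id)
  refine tendsto_atTop_mono' _ ?_ hpoly
  filter_upwards [eventually_ge_atTop t₀] with t ht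
  rw [div_mul_eq_mul_div]
  exact add_mul_pow_div_factorial_le hf ht hnonneg fun x hx ↦ hm x hx.1.le

lemma iteratedDeriv_three_nonpos_of_superlinear_le (hw : ContDiff ℝ 4 w) (h₀ : w t₀ = 0)
    (h₁ : iteratedDeriv 1 w t₀ = 0) (h₂ : iteratedDeriv 2 w t₀ = 0)
    (hg : ∀ x, 0 ≤ x → 0 ≤ g x) (hq : 1 < q) (hc : 0 < c)
    (hgrowth : ∀ᶠ x in atTop, c * x ^ q ≤ g x)
    (h : ∀ t ≥ t₀, 0 ≤ w t → g (w t) ≤ iteratedDeriv 4 w t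
      - (a ^ 2 + b ^ 2) * iteratedDeriv 2 w t + a ^ 2 * b ^ 2 * w t) :
    iteratedDeriv 3 w t₀ ≤ 0 := by
  by_contra! h₃
  have hw_nonneg := nonneg_of_nonneg_imp_factored_nonneg hw h₀ h₁ h₂ h₃
    fun t ht hwt ↦ (hg _ hwt).trans (h t ht hwt)
  have hcmp (t) (ht : t₀ ≤ t) := factored_comparison hw h₀.ge h₁.ge (by simp [h₀, h₂])
    (by simpa [h₁] using h₃.le) (fun s hs ↦
      (hg _ (hw_nonneg s hs.1)).trans (h s hs.1 (hw_nonneg s hs.1))) t ⟨ht, le_rfl⟩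
  have hw₂ (t) (ht : t₀ ≤ t) : 0 ≤ iteratedDeriv 2 w t :=
    (mul_nonneg (sq_nonneg a) (hw_nonneg t ht)).trans (hcmp t ht).2.2.1
  have hw₄ (t) (ht : t₀ ≤ t) : g (w t) ≤ iteratedDeriv 4 w t := by
    have hu := mul_nonneg (sq_nonneg b) (sub_nonneg.2 (hcmp t ht).2.2.1)
    have hw₂' := mul_nonneg (sq_nonneg a) (hw₂ t ht)
    linarith [h t ht (hw_nonneg t ht)]
  have htop : Tendsto w atTop atTop :=
    tendsto_atTop_of_pos_le_iteratedDeriv (n := 2) (hw.of_le (by norm_num)) h₃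
      (by intro k hk; interval_cases k <;> simp [h₁, h₂]) fun t ht ↦ (hcmp t ht).2.2.2
  obtain ⟨T, hT⟩ := eventually_atTop.1 <|
    (htop.eventually hgrowth).and ((htop.eventually_gt_atTop 0).and (eventually_ge_atTop t₀))
  refine false_of_rpow_le_iteratedDeriv (n := 3) (T := T) hw hq hc (hT T le_rfl).2.1 ?_
    fun t ht ↦ (hT t ht).1.trans (hw₄ t (hT t ht).2.2)
  intro k hk t ht
  have ht₀ : t₀ ≤ t := (hT t ht).2.2
  interval_cases k
  · simpa [h₁] using (hcmp t ht₀).2.1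
  · exact hw₂ t ht₀
  · exact h₃.le.trans (hcmp t ht₀).2.2.2
  · exact (hg _ (hw_nonneg t ht₀)).trans (hw₄ t ht₀)

end SuperlinearForcing

section Uniqueness

open scoped NNReal

lemma eq_of_hasDerivAt_of_locallyLipschitzOn {E : Type*} [NormedAddCommGroup E] [NormedSpace ℝ E]
    {F : E → E} {s : Set E} {x y : ℝ → E} {t₀ : ℝ} (hF : LocallyLipschitzOn s F)
    (hx : ∀ t, HasDerivAt x (F (x t)) t) (hxs : ∀ t, x t ∈ s)
    (hy : ∀ t, HasDerivAt y (F (y t)) t) (hys : ∀ t, y t ∈ s) (h : x t₀ = y t₀) : x = y := by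
  ext t
  obtain ⟨l, r, ht, ht₀⟩ : ∃ l r, t ∈ Ioo l r ∧ t₀ ∈ Ioo l r := by
    refine ⟨min t t₀ - 1, max t t₀ + 1, ?_⟩
    grind
  have hcompact : IsCompact (x '' Icc l r ∪ y '' Icc l r) :=
    (isCompact_Icc.image (continuous_iff_continuousAt.2 fun t ↦ (hx t).continuousAt)).union
      (isCompact_Icc.image (continuous_iff_continuousAt.2 fun t ↦ (hy t).continuousAt))
  have hsubset : x '' Icc l r ∪ y '' Icc l r ⊆ s :=
    union_subset (image_subset_iff.2 fun t _ ↦ hxs t) (image_subset_iff.2 fun t _ ↦ hys t)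
  obtain ⟨K, hK⟩ := (hF.mono hsubset).exists_lipschitzOnWith_of_compact hcompact
  exact ODE_solution_unique_of_mem_Ioo (fun _ _ ↦ hK) ht₀
    (fun t ht ↦ ⟨hx t, .inl (mem_image_of_mem x (Ioo_subset_Icc_self ht))⟩)
    (fun t ht ↦ ⟨hy t, .inr (mem_image_of_mem y (Ioo_subset_Icc_self ht))⟩) h ht

lemma locallyLipschitzOn_comp {X Y Z : Type*} [PseudoEMetricSpace X] [PseudoEMetricSpace Y]
    [PseudoEMetricSpace Z] {f : Y → Z} {h : X → Y} {s : Set X} {u : Set Y}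
    (hf : LocallyLipschitzOn u f) (hh : LocallyLipschitzOn s h) (hsu : MapsTo h s u) :
    LocallyLipschitzOn s (f ∘ h) := by
  intro x hx
  obtain ⟨K, v, hv, hK⟩ := hf (hsu hx)
  obtain ⟨L, v', hv', hL⟩ := hh hx
  exact ⟨K * L, v' ∩ h ⁻¹' v,
    inter_mem hv' (((hh.continuousOn x hx).tendsto_nhdsWithin hsu) hv),
    hK.comp (hL.mono inter_subset_left) fun _ hy ↦ hy.2⟩

lemma locallyLipschitzOn_snoc_tail {E : Type*} [PseudoEMetricSpace E] {n : ℕ}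
    {F : (Fin (n + 1) → E) → E} {s : Set (Fin (n + 1) → E)} (hF : LocallyLipschitzOn s F) :
    LocallyLipschitzOn s fun x ↦ (Fin.snoc (Fin.tail x) (F x) : Fin (n + 1) → E) := by
  intro x hx
  obtain ⟨K, v, hv, hK⟩ := hF hx
  refine ⟨max 1 K, v, hv, fun y hy z hz ↦ edist_pi_le_iff.2 (Fin.lastCases ?_ fun i ↦ ?_)⟩
  · simp only [Fin.snoc_last]
    exact hK.weaken (le_max_right 1 K) hy hz
  · simp only [Fin.snoc_castSucc, Fin.tail]
    calc edist (y i.succ) (z i.succ) ≤ edist y z := edist_le_pi_edist y z i.succ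
      _ = (1 : ℝ≥0) * edist y z := by simp
      _ ≤ (max 1 K : ℝ≥0) * edist y z := by gcongr; exact le_max_left 1 K

variable {E : Type*} [NormedAddCommGroup E] [NormedSpace ℝ E] {n : ℕ}

/-- The jet of order `n - 1` of a curve `f`: the vector of its derivatives of order less than `n`.
It turns an `n`-th order differential equation for `f` into a first order one. -/
def jet (n : ℕ) (f : ℝ → E) (t : ℝ) : Fin n → E := fun k ↦ iteratedDeriv k f t

lemma hasDerivAt_jet {f : ℝ → E} (hf : ContDiff ℝ (n + 1) f) (t : ℝ) :
    HasDerivAt (jet (n + 1) f)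
      (Fin.snoc (Fin.tail (jet (n + 1) f t)) (iteratedDeriv (n + 1) f t)) t := by
  refine hasDerivAt_pi.2 fun k ↦ ?_
  refine (hasDerivAt_iteratedDeriv (n := n + 1) hf k.2 t).congr_deriv ?_
  induction k using Fin.lastCases with
  | last => simp
  | cast k => simp [Fin.tail, jet]

lemma eq_of_iteratedDeriv_eq_of_jet_eq {F : (Fin (n + 1) → E) → E} {s : Set (Fin (n + 1) → E)}
    {f h : ℝ → E} {t₀ : ℝ} (hF : LocallyLipschitzOn s F)
    (hf : ContDiff ℝ (n + 1) f) (hfs : ∀ t, jet (n + 1) f t ∈ s)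
    (hfF : ∀ t, iteratedDeriv (n + 1) f t = F (jet (n + 1) f t))
    (hh : ContDiff ℝ (n + 1) h) (hhs : ∀ t, jet (n + 1) h t ∈ s)
    (hhF : ∀ t, iteratedDeriv (n + 1) h t = F (jet (n + 1) h t))
    (hjet : jet (n + 1) f t₀ = jet (n + 1) h t₀) : f = h := by
  have hjets : jet (n + 1) f = jet (n + 1) h :=
    eq_of_hasDerivAt_of_locallyLipschitzOn (locallyLipschitzOn_snoc_tail hF)
      (fun t ↦ by simpa only [hfF] using hasDerivAt_jet hf t) hfs
      (fun t ↦ by simpa only [hhF] using hasDerivAt_jet hh t) hhs hjet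
  ext t
  simpa [jet] using congrFun₂ hjets t 0

end Uniqueness

section Nonlinearity

variable {g : ℝ → ℝ}

lemma monotoneOn_div_id_of_div_le_deriv (hg : DifferentiableOn ℝ g (Ioi 0))
    (h : ∀ x > 0, g x / x ≤ deriv g x) : MonotoneOn (fun x ↦ g x / x) (Ioi 0) := by
  have hderiv : ∀ x > 0, HasDerivAt (fun x ↦ g x / x) ((deriv g x * x - g x * 1) / x ^ 2) x :=
    fun x hx ↦ (hg.hasDerivAt (Ioi_mem_nhds hx)).div (hasDerivAt_id' x) hx.ne'
  refine monotoneOn_of_hasDerivWithinAt_nonneg (convex_Ioi 0)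
    (fun x hx ↦ (hderiv x hx).continuousAt.continuousWithinAt)
    (fun x hx ↦ (hderiv x (interior_subset hx)).hasDerivWithinAt) fun x hx ↦ ?_
  have hx : 0 < x := interior_subset hx
  have := (div_le_iff₀ hx).1 (h x hx)
  exact div_nonneg (by linarith) (sq_nonneg x)

lemma add_le_map_add_of_monotoneOn_div_id (hg₀ : g 0 = 0)
    (hg : MonotoneOn (fun x ↦ g x / x) (Ioi 0)) {x y : ℝ} (hx : 0 ≤ x) (hy : 0 ≤ y) :
    g x + g y ≤ g (x + y) := by
  rcases hx.eq_or_lt with rfl | hx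
  · simp [hg₀]
  rcases hy.eq_or_lt with rfl | hy
  · simp [hg₀]
  have hxy : 0 < x + y := add_pos hx hy
  have hle {z : ℝ} (hz : 0 < z) (hzxy : z ≤ x + y) : g z ≤ g (x + y) / (x + y) * z :=
    (div_le_iff₀ hz).1 (hg hz hxy hzxy)
  calc g x + g y ≤ g (x + y) / (x + y) * x + g (x + y) / (x + y) * y :=
        add_le_add (hle hx (by linarith)) (hle hy (by linarith))
    _ = g (x + y) := by rw [← mul_add, div_mul_cancel₀ _ hxy.ne']

lemma locallyLipschitzOn_Ici_of_abs_deriv_le (hg : ContinuousOn g (Ici 0))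
    (hg' : DifferentiableOn ℝ g (Ioi 0)) {L : ℝ → ℝ} (hL : MonotoneOn L (Ioi 0))
    (h : ∀ x > 0, |deriv g x| ≤ L x) : LocallyLipschitzOn (Ici 0) g := by
  intro x hx
  have hx₁ : 0 < x + 1 := add_pos_of_nonneg_of_pos hx one_pos
  refine ⟨(L (x + 1)).toNNReal, Icc 0 (x + 1),
    inter_mem_nhdsWithin (Ici 0) (Iic_mem_nhds (lt_add_one x)), ?_⟩
  rw [← closure_Ioo hx₁.ne]
  refine LipschitzOnWith.closure ?_ ?_
  · rw [closure_Ioo hx₁.ne]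
    exact hg.mono Icc_subset_Ici_self
  · refine (convex_Ioo 0 (x + 1)).lipschitzOnWith_of_nnnorm_deriv_le
      (fun y hy ↦ hg'.differentiableAt (Ioi_mem_nhds hy.1)) fun y hy ↦ ?_
    exact NNReal.le_toNNReal_of_coe_le ((h y hy.1).trans (hL hy.1 hx₁ hy.2.le))

end Nonlinearity

namespace CondG

variable {n : ℕ} {g : ℝ → ℝ}

lemma differentiableOn (hg : CondG n g) : DifferentiableOn ℝ g (Ioi 0) :=
  hg.1.differentiableOn one_ne_zero

lemma monotoneOn_div_id (hg : CondG n g) : MonotoneOn (fun x ↦ g x / x) (Ioi 0) :=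
  monotoneOn_div_id_of_div_le_deriv hg.differentiableOn fun x hx ↦ (hg.2.2.2.1 x hx).1.le

lemma nonneg (hg : CondG n g) {x : ℝ} (hx : 0 ≤ x) : 0 ≤ g x := by
  obtain ⟨-, hpos, -, -, -, -, hzero⟩ := hg
  rcases hx.eq_or_lt with rfl | hx
  · exact hzero.ge
  · exact (hpos x hx).le

lemma add_le_map_add (hg : CondG n g) {x y : ℝ} (hx : 0 ≤ x) (hy : 0 ≤ y) :
    g x + g y ≤ g (x + y) :=
  add_le_map_add_of_monotoneOn_div_id hg.2.2.2.2.2.2 hg.monotoneOn_div_id hx hy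

lemma continuousOn (hg : CondG n g) : ContinuousOn g (Ici 0) := by
  obtain ⟨hdiff, -, hlim, -, -, -, hzero⟩ := hg
  intro x hx
  rcases (show (0 : ℝ) ≤ x from hx).eq_or_lt with rfl | hx
  · rwa [← continuousWithinAt_Ioi_iff_Ici, ContinuousWithinAt, hzero]
  · exact (hdiff.continuousOn.continuousAt (Ioi_mem_nhds hx)).continuousWithinAt

lemma locallyLipschitzOn (hg : CondG n g) : LocallyLipschitzOn (Ici 0) g := by
  refine locallyLipschitzOn_Ici_of_abs_deriv_le hg.continuousOn hg.differentiableOn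
    (L := fun x ↦ |((n : ℝ) + 4) / (n - 4)| * (g x / x))
    (fun x hx y hy hxy ↦
      mul_le_mul_of_nonneg_left (hg.monotoneOn_div_id hx hy hxy) (abs_nonneg _)) fun x hx ↦ ?_
  obtain ⟨hlower, hupper⟩ := hg.2.2.2.1 x hx
  have hquot : 0 ≤ g x / x := div_nonneg (hg.nonneg hx.le) hx.le
  rw [abs_of_nonneg (hquot.trans hlower.le)]
  exact hupper.trans (mul_le_mul_of_nonneg_right (le_abs_self _) hquot)

end CondG

namespace IsSol

variable {A B a b q c t₀ : ℝ} {g v W : ℝ → ℝ}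

lemma comp_const_sub (hv : IsSol A B g v) (s : ℝ) : IsSol A B g fun t ↦ v (s - t) := by
  intro t
  simpa [iteratedDeriv_comp_const_sub, Even.neg_one_pow (by decide : Even 4)] using hv (s - t)

lemma operator_sub_eq (hv : IsSol A B g v) (hW : IsSol A B g W) (hv₄ : ContDiff ℝ 4 v)
    (hW₄ : ContDiff ℝ 4 W) (t : ℝ) :
    iteratedDeriv 4 (v - W) t - A * iteratedDeriv 2 (v - W) t + B * (v - W) t =
      g (v t) - g (W t) := by
  rw [iteratedDeriv_sub hv₄.contDiffAt hW₄.contDiffAt,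
    iteratedDeriv_sub (hv₄.of_le (by norm_num)).contDiffAt (hW₄.of_le (by norm_num)).contDiffAt,
    ← hv t, ← hW t, Pi.sub_apply]
  ring

lemma iteratedDeriv_three_le (hv : IsSol (a ^ 2 + b ^ 2) (a ^ 2 * b ^ 2) g v)
    (hW : IsSol (a ^ 2 + b ^ 2) (a ^ 2 * b ^ 2) g W) (hv₄ : ContDiff ℝ 4 v) (hW₄ : ContDiff ℝ 4 W)
    (hW_nonneg : ∀ t, 0 ≤ W t) (hg : ∀ x, 0 ≤ x → 0 ≤ g x)
    (hsuper : ∀ x y, 0 ≤ x → 0 ≤ y → g x + g y ≤ g (x + y)) (hq : 1 < q) (hc : 0 < c)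
    (hgrowth : ∀ᶠ x in atTop, c * x ^ q ≤ g x)
    (hjet : ∀ k < 3, iteratedDeriv k v t₀ = iteratedDeriv k W t₀) :
    iteratedDeriv 3 v t₀ ≤ iteratedDeriv 3 W t₀ := by
  have hsub : ∀ k ≤ 4, iteratedDeriv k (v - W) t₀ = iteratedDeriv k v t₀ - iteratedDeriv k W t₀ :=
    fun k hk ↦ iteratedDeriv_sub (hv₄.of_le (mod_cast hk)).contDiffAt
      (hW₄.of_le (mod_cast hk)).contDiffAt
  have hzero : ∀ k < 3, iteratedDeriv k (v - W) t₀ = 0 := fun k hk ↦ by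
    rw [hsub k (by omega), hjet k hk, sub_self]
  rw [← sub_nonpos, ← hsub 3 (by norm_num)]
  refine iteratedDeriv_three_nonpos_of_superlinear_le (a := a) (b := b) (hv₄.sub hW₄)
    (by simpa using hzero 0 (by norm_num)) (hzero 1 (by norm_num)) (hzero 2 (by norm_num))
    hg hq hc hgrowth fun t _ hwt ↦ ?_
  rw [hv.operator_sub_eq hW hv₄ hW₄, le_sub_iff_add_le]
  simpa using hsuper _ _ hwt (hW_nonneg t)

lemma eq_of_jet_eq (hv : IsSol A B g v) (hW : IsSol A B g W) (hv₄ : ContDiff ℝ 4 v)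
    (hW₄ : ContDiff ℝ 4 W) {s : Set ℝ} (hvs : ∀ t, v t ∈ s) (hWs : ∀ t, W t ∈ s)
    (hg : LocallyLipschitzOn s g) (hjet : jet 4 v t₀ = jet 4 W t₀) : v = W := by
  let ℓ : (Fin 4 → ℝ) →L[ℝ] ℝ :=
    A • ContinuousLinearMap.proj 2 - B • ContinuousLinearMap.proj 0
  have hg' : LocallyLipschitzOn {x : Fin 4 → ℝ | x 0 ∈ s} fun x ↦ ℓ x + g (x 0) :=
    (ℓ.lipschitz.locallyLipschitz.locallyLipschitzOn).add <|
      locallyLipschitzOn_comp hg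
        ((LipschitzWith.eval 0).locallyLipschitz.locallyLipschitzOn) fun _ hx ↦ hx
  have hsol {u : ℝ → ℝ} (hu : IsSol A B g u) (t : ℝ) :
      iteratedDeriv 4 u t = ℓ (jet 4 u t) + g (jet 4 u t 0) := by
    simp [ℓ, jet, ← hu t]
  exact eq_of_iteratedDeriv_eq_of_jet_eq (n := 3) hg' hv₄ (by simpa [jet] using hvs) (hsol hv)
    hW₄ (by simpa [jet] using hWs) (hsol hW) hjet

lemma eq_of_iteratedDeriv_eq_of_lt_three (hv : IsSol (a ^ 2 + b ^ 2) (a ^ 2 * b ^ 2) g v)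
    (hW : IsSol (a ^ 2 + b ^ 2) (a ^ 2 * b ^ 2) g W) (hv₄ : ContDiff ℝ 4 v) (hW₄ : ContDiff ℝ 4 W)
    (hv_nonneg : ∀ t, 0 ≤ v t) (hW_nonneg : ∀ t, 0 ≤ W t) (hg : ∀ x, 0 ≤ x → 0 ≤ g x)
    (hsuper : ∀ x y, 0 ≤ x → 0 ≤ y → g x + g y ≤ g (x + y)) (hlip : LocallyLipschitzOn (Ici 0) g)
    (hq : 1 < q) (hc : 0 < c) (hgrowth : ∀ᶠ x in atTop, c * x ^ q ≤ g x)
    (hjet : ∀ k < 3, iteratedDeriv k v t₀ = iteratedDeriv k W t₀) : v = W := by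
  have hthird : iteratedDeriv 3 v t₀ = iteratedDeriv 3 W t₀ :=
    (hv.iteratedDeriv_three_le hW hv₄ hW₄ hW_nonneg hg hsuper hq hc hgrowth hjet).antisymm <|
      hW.iteratedDeriv_three_le hv hW₄ hv₄ hv_nonneg hg hsuper hq hc hgrowth
        fun k hk ↦ (hjet k hk).symm
  exact hv.eq_of_jet_eq hW hv₄ hW₄ (s := Ici 0) hv_nonneg hW_nonneg hlip
    (funext <| Fin.lastCases hthird fun k ↦ hjet k k.2)

end IsSol

theorem stmt_11_general {a b q c t₀ : ℝ} {g v : ℝ → ℝ} (hg : ∀ x, 0 ≤ x → 0 ≤ g x)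
    (hsuper : ∀ x y, 0 ≤ x → 0 ≤ y → g x + g y ≤ g (x + y)) (hlip : LocallyLipschitzOn (Ici 0) g)
    (hq : 1 < q) (hc : 0 < c) (hgrowth : ∀ᶠ x in atTop, c * x ^ q ≤ g x)
    (hv₄ : ContDiff ℝ 4 v) (hv_nonneg : ∀ t, 0 ≤ v t)
    (hv : IsSol (a ^ 2 + b ^ 2) (a ^ 2 * b ^ 2) g v) (ht₀ : deriv v t₀ = 0) (t : ℝ) :
    v (t₀ + t) = v (t₀ - t) := by
  have hreflect : v = fun t ↦ v (t₀ + t₀ - t) :=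
    hv.eq_of_iteratedDeriv_eq_of_lt_three (t₀ := t₀) (hv.comp_const_sub _) hv₄
      (hv₄.comp (contDiff_const.sub contDiff_id)) hv_nonneg (fun _ ↦ hv_nonneg _) hg hsuper hlip
      hq hc hgrowth fun k hk ↦ by
        interval_cases k <;> simp [iteratedDeriv_comp_const_sub, ht₀]
  simpa only [add_sub_add_left_eq_sub] using congrFun hreflect (t₀ + t)

theorem stmt_11 (n : ℕ) (hn : 5 ≤ n) (g : ℝ → ℝ) (hg : CondG n g)
    (A B : ℝ) (hA : A = ((n : ℝ) * ((n : ℝ) - 4) + 8) / 2)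
    (hB : B = (n : ℝ) ^ 2 * ((n : ℝ) - 4) ^ 2 / 16)
    (v : ℝ → ℝ) (hv4 : ContDiff ℝ 4 v) (hvnn : ∀ t, 0 ≤ v t) (hvsol : IsSol A B g v)
    (t₀ : ℝ) (ht₀ : deriv v t₀ = 0) :
    ∀ t : ℝ, v (t₀ + t) = v (t₀ - t) := by
  obtain ⟨q, c, hq, hc, hgrowth⟩ := hg.2.2.2.2.2.1
  have hA' : A = ((n : ℝ) / 2) ^ 2 + (((n : ℝ) - 4) / 2) ^ 2 := by rw [hA]; ring
  have hB' : B = ((n : ℝ) / 2) ^ 2 * (((n : ℝ) - 4) / 2) ^ 2 := by rw [hB]; ring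
  exact stmt_11_general (fun _ ↦ hg.nonneg) (fun _ _ ↦ hg.add_le_map_add) hg.locallyLipschitzOn
    hq hc (eventually_atTop.2 ⟨1, hgrowth⟩) hv4 hvnn (hA' ▸ hB' ▸ hvsol) ht₀
end
end
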